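/- Let l be a positive integer, λ a partition with ℓ(λ) ≤ l, and ζ a primitive l-th root of unity. Then the specialization P_λ(1, ζ, ζ², …, ζ^{l−1}; q, ζ) equals (−1)^{(l−1)r} if λ = (r^l) is a rectangle with l parts all equal to some r ≥ 0, and equals 0 otherwise. -/

import Mathlib

open MvPolynomial

noncomputable section MacdonaldPreliminaries

/-! ### Base fields: `KK = ℂ(q)` and `FF = ℂ(q)(t)` -/

/-- The field `ℂ(q)` of rational functions in the indeterminate `q`. -/
abbrev KK : Type := RatFunc ℂ

/-- The field `ℂ(q)(t) = ℂ(q,t)`, rational functions in `t` over `ℂ(q)`. -/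
abbrev FF : Type := RatFunc KK

/-- The indeterminate `q`, as an element of `ℂ(q)`. -/
def qK : KK := RatFunc.X

/-- The indeterminate `q`, as an element of `ℂ(q,t)`. -/
def qF : FF := RatFunc.C qK

/-- The indeterminate `t`, as an element of `ℂ(q,t)`. -/
def tF : FF := RatFunc.X

/-! ### The ring of symmetric functions

We model the ring `Λ_R` of symmetric functions over `R` as the free commutative
`R`-algebra on the power sums `p₁, p₂, p₃, …`, i.e. as the polynomial ring in
countably many variables `X k`, `k : ℕ+`, where `X k` represents the power sum `p_k`. -/

/-- The ring of symmetric functions over `R`: polynomials in the power sums `p_k = X k`. -/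
abbrev SymFn (R : Type) [CommSemiring R] : Type := MvPolynomial ℕ+ R

section Core

variable {R : Type} [Field R]

/-- The power sum `p_d` for `d : ℕ`, with `p_0 = 1` by convention. -/
def pN (d : ℕ) : SymFn R := if h : 0 < d then X (⟨d, h⟩ : ℕ+) else 1

/-- `p_λ = ∏ p_{λᵢ}` for a partition `λ` given as a multiset of positive parts. -/
def pPar (lam : Multiset ℕ+) : SymFn R := (lam.map fun k => (X k : SymFn R)).prod

/-- The complete homogeneous symmetric functions, defined by Newton's recursion
`n·h_n = ∑_{i=1}^n p_i · h_{n-i}` with `h_0 = 1`. -/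
def hsym : ℕ → SymFn R
  | 0 => 1
  | (n+1) => (((n : R) + 1)⁻¹) • ∑ i ∈ Finset.range (n+1),
      (X (⟨i+1, Nat.succ_pos i⟩ : ℕ+) : SymFn R) * hsym (n - i)
decreasing_by exact Nat.lt_succ_of_le (Nat.sub_le n i)

/-- `h_z` for an integer index, vanishing for negative `z` (used in Jacobi–Trudi). -/
def hInt (z : ℤ) : SymFn R := if 0 ≤ z then hsym (R := R) z.toNat else 0

/-- The parts of a partition (a multiset of positive integers), sorted decreasingly. -/
def descParts (lam : Multiset ℕ+) : List ℕ :=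
  ((lam.map fun a : ℕ+ => (a : ℕ)).sort (· ≤ ·)).reverse

/-- The weight `|λ|` of a partition. -/
def wt (lam : Multiset ℕ+) : ℕ := (lam.map fun a : ℕ+ => (a : ℕ)).sum

/-- The Schur function `s_λ`, via the Jacobi–Trudi formula
`s_λ = det(h_{λᵢ - i + j})₁≤i,j≤ℓ`. -/
def schur (lam : Multiset ℕ+) : SymFn R :=
  Matrix.det (Matrix.of fun i j : Fin (Multiset.card lam) =>
    hInt (R := R) ((((descParts lam).getD i 0 : ℕ) : ℤ) + (j : ℤ) - (i : ℤ)))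

/-- `h_ν = ∏ h_{νⱼ}` for a partition `ν`. -/
def hPar (nu : Multiset ℕ+) : SymFn R := (nu.map fun a => hsym (R := R) (a : ℕ)).prod

/-! ### Inner products -/

/-- The `(q,t)`-deformed weight `z_λ(q,t)` attached to the monomial `∏ (X k)^(m k)`,
namely `∏_k (m k)! · k^(m k) · ((1-q^k)/(1-t^k))^(m k)`. -/
def zwtQT (q t : R) (m : ℕ+ →₀ ℕ) : R :=
  ∏ k ∈ m.support,
    ((Nat.factorial (m k) : R) * ((k : ℕ) : R) ^ (m k) *
      ((1 - q ^ (k : ℕ)) / (1 - t ^ (k : ℕ))) ^ (m k))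

/-- The Macdonald inner product `⟨·,·⟩_{q,t}`, defined on the power sum basis by
`⟨p_λ, p_μ⟩_{q,t} = δ_{λμ} z_λ(q,t)`. -/
def innerQT (q t : R) (f g : SymFn R) : R :=
  ∑ m ∈ f.support, MvPolynomial.coeff m f * MvPolynomial.coeff m g * zwtQT q t m

/-- The classical weight `z_λ = ∏_k (m k)! k^(m k)` attached to a monomial. -/
def zwtH (m : ℕ+ →₀ ℕ) : R :=
  ∏ k ∈ m.support, ((Nat.factorial (m k) : R) * ((k : ℕ) : R) ^ (m k))

/-- The standard Hall inner product, `⟨p_λ, p_μ⟩ = δ_{λμ} z_λ`. -/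
def innerH (f g : SymFn R) : R :=
  ∑ m ∈ f.support, MvPolynomial.coeff m f * MvPolynomial.coeff m g * zwtH (R := R) m

/-- The internal (Kronecker) product `⋆`, determined by `p_λ ⋆ p_μ = δ_{λμ} z_λ p_λ`. -/
def star (f g : SymFn R) : SymFn R :=
  ∑ m ∈ f.support,
    MvPolynomial.monomial m (MvPolynomial.coeff m f * MvPolynomial.coeff m g * zwtH (R := R) m)

/-! ### Dominance order and the Macdonald basis -/

/-- Sum of the `k` largest parts of `λ`. -/
def pSum (lam : Multiset ℕ+) (k : ℕ) : ℕ := ((descParts lam).take k).sum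

/-- `μ` is strictly dominated by `λ`: same weight, `μ ≠ λ`, and all partial sums of the
decreasingly sorted parts of `μ` are at most those of `λ`. -/
def StrictDom (mu lam : Multiset ℕ+) : Prop :=
  mu ≠ lam ∧ wt mu = wt lam ∧ ∀ k, pSum mu k ≤ pSum lam k

/-- Characterization of the Macdonald basis `P_λ(x;q,t)` (obtained from the Schur basis by
Gram–Schmidt orthogonalization w.r.t. `⟨·,·⟩_{q,t}`): `P_λ` is unitriangular with respect to
the Schur functions of strictly dominated partitions, and the `P_λ` are pairwise orthogonal. -/
def IsMacdonaldBasis (q t : R) (P : Multiset ℕ+ → SymFn R) : Prop :=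
  (∀ lam, P lam - schur lam ∈
      Submodule.span R ((schur (R := R)) '' {mu | StrictDom mu lam})) ∧
  (∀ lam mu, lam ≠ mu → innerQT q t (P lam) (P mu) = 0)

/-- `Q_λ = P_λ / ⟨P_λ, P_λ⟩_{q,t}`. -/
def Qfam (q t : R) (P : Multiset ℕ+ → SymFn R) (lam : Multiset ℕ+) : SymFn R :=
  (innerQT q t (P lam) (P lam))⁻¹ • P lam

/-- The algebra endomorphism of `Λ_R` rescaling each power sum: `p_k ↦ g k · p_k`. -/
def scaleHom (g : ℕ+ → R) : SymFn R →ₐ[R] SymFn R :=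
  aeval fun k : ℕ+ => (C (g k) * X k : SymFn R)

/-- The modified Macdonald polynomial `Q'_λ(x;q,t) = Q_λ(((1-q)/(1-t))·x; q,t)`,
the image of `Q_λ` under `p_k ↦ ((1-q^k)/(1-t^k))·p_k`. -/
def Qprime (q t : R) (P : Multiset ℕ+ → SymFn R) (lam : Multiset ℕ+) : SymFn R :=
  scaleHom (fun k => (1 - q ^ (k : ℕ)) / (1 - t ^ (k : ℕ))) (Qfam q t P lam)

/-! ### Plethysm -/

/-- Plethysm by the power sum on the left: `p_l ∘ f`, the ring endomorphism `p_k ↦ p_{lk}`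
applied to `f`. -/
def plethP (l : ℕ+) : SymFn R →ₐ[R] SymFn R :=
  aeval fun k : ℕ+ => (X (l * k) : SymFn R)

/-- General plethysm `g ∘ f`: the algebra homomorphism in `g` sending `p_k` to `p_k ∘ f`. -/
def pleth (g f : SymFn R) : SymFn R :=
  aeval (fun k : ℕ+ => plethP k f) g

/-! ### Cells of a partition: arms, legs, the constants `c_μ`, `c'_μ` and `n(μ)` -/

/-- Arm length of the (0-indexed) cell `(i,j)` of `λ`: `λ_i - j - 1`. -/
def armM (lam : Multiset ℕ+) (i j : ℕ) : ℕ := (descParts lam).getD i 0 - (j + 1)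

/-- Leg length of the (0-indexed) cell `(i,j)` of `λ`: the number of cells below it
in the same column. -/
def legM (lam : Multiset ℕ+) (i j : ℕ) : ℕ :=
  ((List.range (descParts lam).length).filter
    (fun i' => decide (i < i') && decide (j < (descParts lam).getD i' 0))).length

/-- Product of a quantity over all cells of the partition `λ`. -/
def cellProd {S : Type} [CommMonoid S] (lam : Multiset ℕ+) (f : ℕ → ℕ → S) : S :=
  ∏ i ∈ Finset.range (descParts lam).length,
    ∏ j ∈ Finset.range ((descParts lam).getD i 0), f i j

/-- `c_μ(q,t) = ∏_{s∈μ} (1 - q^{a(s)} t^{l(s)+1})`. -/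
def cLow (q t : R) (lam : Multiset ℕ+) : R :=
  cellProd lam fun i j => 1 - q ^ (armM lam i j) * t ^ (legM lam i j + 1)

/-- `c'_μ(q,t) = ∏_{s∈μ} (1 - q^{a(s)+1} t^{l(s)})`. -/
def cUp (q t : R) (lam : Multiset ℕ+) : R :=
  cellProd lam fun i j => 1 - q ^ (armM lam i j + 1) * t ^ (legM lam i j)

/-- `n(λ) = ∑ (i-1)·λ_i`. -/
def nInv (lam : Multiset ℕ+) : ℕ :=
  ∑ i ∈ Finset.range (descParts lam).length, i * (descParts lam).getD i 0

/-- The modified Macdonald polynomial of Haglund–Haiman–Loehr,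
`H̃_μ(x;q,t) = t^{n(μ)} J_μ(x/(1-t⁻¹); q, t⁻¹)`, where `J_μ(x;q,t) = c_μ(q,t) P_μ(x;q,t)`
and `Pinv` is the Macdonald basis at parameters `(q, t⁻¹)`. -/
def Htilde (q t : R) (Pinv : Multiset ℕ+ → SymFn R) (lam : Multiset ℕ+) : SymFn R :=
  C (t ^ nInv lam) *
    scaleHom (fun k => (1 - (t⁻¹) ^ (k : ℕ))⁻¹) (C (cLow q t⁻¹ lam) * Pinv lam)

/-! ### Cyclic characters -/

/-- The Ramanujan (Von Sterneck) sum `c(j,d)`: the sum of the `j`-th powers of the primitive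
`d`-th roots of unity (computed in the domain `R`). -/
def cRam [IsDomain R] (j d : ℕ) : R := ∑ z ∈ primitiveRoots d R, z ^ j

/-- The Frobenius characteristic `l_k^{(j)} = (1/k) ∑_{d ∣ k} c(j,d) p_d^{k/d}` of the
representation of `S_k` induced from the `j`-th character of the cyclic subgroup generated
by a `k`-cycle. -/
def lchar [IsDomain R] (k j : ℕ) : SymFn R :=
  ((k : R))⁻¹ • ∑ d ∈ Nat.divisors k, (cRam (R := R) j d) • ((pN (R := R) d) ^ (k / d))

end Core

/-! ### Specialization `t = ζ` and evaluation maps -/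

/-- Evaluation of a rational function in `t` over `ℂ(q)` at a point `c : ℂ(q)`. -/
def evalT (c : KK) (x : FF) : KK := RatFunc.eval (RingHom.id KK) c x

/-- Coefficientwise specialization `t = c` of a symmetric function over `ℂ(q,t)`. -/
def specT (c : KK) (f : SymFn FF) : SymFn KK :=
  ∑ m ∈ f.support, MvPolynomial.monomial m (evalT c (MvPolynomial.coeff m f))

/-- Evaluation `f ↦ f(1, ζ, ζ², …, ζ^{l-1}; q, ζ)`: substitute the finite alphabet
`x_i = ζ^{i-1}` (`1 ≤ i ≤ l`) and then specialize `t = ζ`. -/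
def macEvalRoots (l : ℕ) (z : ℂ) (f : SymFn FF) : KK :=
  evalT (RatFunc.C z)
    ((aeval fun k : ℕ+ =>
        ∑ i ∈ Finset.range l, (RatFunc.C (RatFunc.C z) : FF) ^ (i * (k : ℕ))) f)

/-- Evaluation of a symmetric function over `ℂ(q,t)` at the finite alphabet
`(1, t, t², …, t^{l-1})`. -/
def evalAlphT (l : ℕ) : SymFn FF →ₐ[FF] FF :=
  aeval fun k : ℕ+ => ∑ i ∈ Finset.range l, tF ^ (i * (k : ℕ))

/-- Congruence to `0` modulo the cyclotomic polynomial `Φ_l(t)` for a rational function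
in `t`: `x = Φ_l(t) · (a/b)` with `b` coprime to `Φ_l`. -/
def CongrModPhi (l : ℕ) (x : FF) : Prop :=
  ∃ a b : Polynomial KK, IsCoprime b (Polynomial.cyclotomic l KK) ∧
    x = algebraMap (Polynomial KK) FF (Polynomial.cyclotomic l KK) *
      (algebraMap (Polynomial KK) FF a / algebraMap (Polynomial KK) FF b)

/-- The finite set of all partitions of `n`, as multisets of positive integers. -/
def partitionsOf (n : ℕ) : Finset (Multiset ℕ+) :=
  Finset.univ.image fun pi : Nat.Partition n =>
    pi.parts.attach.map fun a => (⟨a.1, pi.parts_pos a.2⟩ : ℕ+)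

end MacdonaldPreliminaries

set_option linter.unusedSectionVars false
set_option linter.deprecated false

noncomputable section
namespace MacProof

section PartA
variable {R : Type} [Field R] [CharZero R]
variable {B : Type} [CommRing B] [Algebra R B]

/-- `h_n` evaluated at power sums `c`. -/
def hA (R : Type) [Field R] {B : Type} [CommRing B] [Algebra R B] (c : ℕ+ → B) (n : ℕ) : B :=
  aeval c (hsym (R := R) n)

theorem hA_zero (c : ℕ+ → B) : hA R c 0 = 1 := by
  simp [hA, hsym]

theorem hA_rec (c : ℕ+ → B) (n : ℕ) :
    ((n : B) + 1) * hA R c (n+1) = ∑ i ∈ Finset.range (n+1), c (Nat.succPNat i) * hA R c (n - i) := by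
  have h : ((n : R) + 1) ≠ 0 := by exact_mod_cast Nat.succ_ne_zero n
  have h2 : ((n : B) + 1) = algebraMap R B ((n : R) + 1) := by simp
  unfold hA
  rw [hsym, map_smul, h2, ← Algebra.smul_def, smul_smul, mul_inv_cancel₀ h, one_smul]
  simp only [map_sum, map_mul]
  refine Finset.sum_congr rfl fun i _ => ?_
  congr 1
  exact aeval_X c (Nat.succPNat i)

/-- The generating series. -/
def Hs (R : Type) [Field R] {B : Type} [CommRing B] [Algebra R B] (c : ℕ+ → B) : PowerSeries B :=
  PowerSeries.mk (hA R c)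

def Ss {B : Type} [CommRing B] (c : ℕ+ → B) : PowerSeries B :=
  PowerSeries.mk fun i => c (Nat.succPNat i)

theorem Hs_deriv (c : ℕ+ → B) : PowerSeries.derivative B (Hs R c) = Ss c * Hs R c := by
  ext n
  rw [PowerSeries.coeff_derivative, PowerSeries.coeff_mul,
    Finset.Nat.sum_antidiagonal_eq_sum_range_succ_mk, Hs, PowerSeries.coeff_mk, mul_comm, hA_rec]
  simp [Ss]

theorem Hs_unique (c : ℕ+ → B) (F : PowerSeries B) (h0 : PowerSeries.coeff 0 F = 1)
    (h : PowerSeries.derivative B F = Ss c * F) : F = Hs R c := by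
  ext n
  induction n using Nat.strong_induction_on with
  | _ n ih =>
    cases n with
    | zero => rw [h0]; simp [Hs, hA_zero]
    | succ n =>
      have e1 := congrArg (PowerSeries.coeff n) h
      have e2 := congrArg (PowerSeries.coeff n) (Hs_deriv (R := R) c)
      rw [PowerSeries.coeff_derivative, PowerSeries.coeff_mul] at e1 e2
      have hh : ((n : R) + 1) ≠ 0 := by exact_mod_cast Nat.succ_ne_zero n
      have hu : IsUnit ((n : B) + 1) := by
        have h2 : ((n : B) + 1) = algebraMap R B ((n : R) + 1) := by simp
        rw [h2]; exact (IsUnit.mk0 _ hh).map _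
      apply hu.mul_right_cancel
      rw [e1, e2]
      refine Finset.sum_congr rfl fun p hp => ?_
      rw [ih p.2 ?_]
      have := Finset.HasAntidiagonal.mem_antidiagonal.1 hp
      omega

theorem Hs_add (c d : ℕ+ → B) : Hs R (c + d) = Hs R c * Hs R d := by
  symm
  apply Hs_unique
  · simp [PowerSeries.coeff_mul, Hs, hA_zero]
  · rw [Derivation.leibniz, Hs_deriv, Hs_deriv]
    have : Ss (c + d) = Ss c + Ss d := by ext n; simp only [Ss, map_add, PowerSeries.coeff_mk]; rfl
    rw [this]; simp only [smul_eq_mul]; ring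

theorem Hs_zero : Hs R (0 : ℕ+ → B) = 1 := by
  symm
  apply Hs_unique
  · simp
  · have : Ss (0 : ℕ+ → B) = 0 := by ext n; simp only [Ss, map_zero, PowerSeries.coeff_mk]; rfl
    rw [this, zero_mul]; exact PowerSeries.derivative_one

theorem Hs_sum {ι : Type} (s : Finset ι) (c : ι → ℕ+ → B) :
    Hs R (∑ i ∈ s, c i) = ∏ i ∈ s, Hs R (c i) := by
  classical
  induction s using Finset.induction_on with
  | empty => simp [Hs_zero]
  | insert a s ha ih => rw [Finset.sum_insert ha, Finset.prod_insert ha, Hs_add, ih]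

theorem Hs_pow (x : B) : Hs R (fun k : ℕ+ => x ^ (k : ℕ)) = PowerSeries.mk fun n => x ^ n := by
  symm
  apply Hs_unique
  · simp
  · ext n
    rw [PowerSeries.coeff_derivative, PowerSeries.coeff_mul,
      Finset.Nat.sum_antidiagonal_eq_sum_range_succ_mk]
    simp only [Ss, PowerSeries.coeff_mk, Nat.succPNat_coe, Nat.succ_eq_add_one]
    rw [Finset.sum_congr rfl (g := fun _ => x ^ (n+1)) ?_]
    · simp [mul_comm]
    · intro i hi
      rw [← pow_add]; congr 1
      have := Finset.mem_range.1 hi; omega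

theorem Hs_pow_mul (x : B) :
    Hs R (fun k : ℕ+ => x ^ (k : ℕ)) * (1 - PowerSeries.C x * PowerSeries.X) = 1 := by
  rw [Hs_pow]
  ext n
  cases n with
  | zero => simp
  | succ n =>
    rw [mul_sub, mul_one, map_sub, ← mul_assoc, PowerSeries.coeff_succ_mul_X, mul_comm _ (PowerSeries.C x),
      PowerSeries.coeff_C_mul]
    simp [PowerSeries.coeff_one, pow_succ, mul_comm]

theorem hA_scale (s : B) (c : ℕ+ → B) (n : ℕ) :
    hA R (fun k : ℕ+ => s ^ (k : ℕ) * c k) n = s ^ n * hA R c n := by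
  have : (PowerSeries.mk fun n => s ^ n * hA R c n) = Hs R (fun k : ℕ+ => s ^ (k : ℕ) * c k) := by
    apply Hs_unique
    · simp [hA_zero]
    · ext n
      rw [PowerSeries.coeff_derivative, PowerSeries.coeff_mul,
        Finset.Nat.sum_antidiagonal_eq_sum_range_succ_mk]
      simp only [Ss, PowerSeries.coeff_mk, Nat.succPNat_coe, Nat.succ_eq_add_one]
      rw [mul_assoc, mul_comm (hA R c (n+1)), hA_rec, Finset.mul_sum]
      refine Finset.sum_congr rfl fun i hi => ?_
      have : n + 1 = (i + 1) + (n - i) := by have := Finset.mem_range.1 hi; omega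
      nth_rewrite 1 [this]
      rw [pow_add]; ring
  have := congrArg (PowerSeries.coeff n) this
  simpa [Hs] using this.symm

/-- `h_z` at integer index. -/
def hZ (R : Type) [Field R] {B : Type} [CommRing B] [Algebra R B] (c : ℕ+ → B) (z : ℤ) : B :=
  if 0 ≤ z then hA R c z.toNat else 0

theorem hZ_eq (c : ℕ+ → B) (z : ℤ) : hZ R c z = aeval c (hInt (R := R) z) := by
  unfold hZ hInt hA; split_ifs <;> simp

theorem hInt_eq (z : ℤ) : hInt (R := R) z = hZ R (fun k => (X k : SymFn R)) z := by
  rw [hZ_eq]; simp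

theorem hZ_nat (c : ℕ+ → B) (n : ℕ) : hZ R c n = hA R c n := by simp [hZ]
theorem hZ_neg (c : ℕ+ → B) (z : ℤ) (h : z < 0) : hZ R c z = 0 := by simp [hZ, h]

/-- multiplication of the generating series by a polynomial of bounded degree -/
theorem coeff_Hs_mul (c : ℕ+ → B) (F : PowerSeries B) (N : ℕ)
    (hF : ∀ j, N < j → PowerSeries.coeff j F = 0) (a : ℕ) :
    PowerSeries.coeff a (Hs R c * F) =
      ∑ j ∈ Finset.range (N+1), hZ R c ((a : ℤ) - j) * PowerSeries.coeff j F := by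
  rw [mul_comm, PowerSeries.coeff_mul, Finset.Nat.sum_antidiagonal_eq_sum_range_succ_mk]
  have key : ∀ M, (N ≤ M ∧ a ≤ M) → ∑ j ∈ Finset.range (M+1), hZ R c ((a : ℤ) - j) * PowerSeries.coeff j F
      = ∑ j ∈ Finset.range (N+1), hZ R c ((a : ℤ) - j) * PowerSeries.coeff j F := by
    intro M hM
    symm
    apply Finset.sum_subset
    · intro j hj; simp at *; omega
    · intro j _ hj
      rw [hF j (by simp at hj; omega), mul_zero]
  rw [← key (max N a) ⟨le_max_left _ _, le_max_right _ _⟩]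
  have : ∑ j ∈ Finset.range (a+1), hZ R c ((a : ℤ) - j) * PowerSeries.coeff j F =
     ∑ j ∈ Finset.range (max N a+1), hZ R c ((a : ℤ) - j) * PowerSeries.coeff j F := by
    apply Finset.sum_subset
    · intro j hj; simp at *; omega
    · intro j _ hj
      rw [hZ_neg _ _ (by simp at hj; omega), zero_mul]
  rw [← this]
  refine Finset.sum_congr rfl fun j hj => ?_
  have hj := Finset.mem_range.1 hj
  have : (a : ℤ) - j = ((a - j : ℕ) : ℤ) := by omega
  rw [this, hZ_nat, mul_comm]
  simp [Hs]

theorem coeff_prod_lin {ι : Type} (s : Finset ι) (x : ι → B) (j : ℕ) (hj : s.card < j) :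
    PowerSeries.coeff j (∏ i ∈ s, (1 - PowerSeries.C (x i) * PowerSeries.X)) = 0 := by
  classical
  induction s using Finset.induction_on generalizing j with
  | empty => rw [Finset.prod_empty, PowerSeries.coeff_one, if_neg (by omega)]
  | insert a s ha ih =>
    rw [Finset.card_insert_of_notMem ha] at hj
    rw [Finset.prod_insert ha, sub_mul, one_mul, map_sub, ih j (by omega), mul_assoc,
      PowerSeries.coeff_C_mul]
    obtain ⟨j, rfl⟩ : ∃ k, j = k + 1 := ⟨j - 1, by omega⟩
    rw [mul_comm PowerSeries.X, PowerSeries.coeff_succ_mul_X, ih j (by omega)]; simp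

/-- power sums of a finite alphabet -/
def ps {B : Type} [CommRing B] {N : ℕ} (x : Fin N → B) (k : ℕ+) : B := ∑ i, x i ^ (k : ℕ)

theorem Hs_ps {N : ℕ} (x : Fin N → B) :
    Hs R (ps x) * ∏ i, (1 - PowerSeries.C (x i) * PowerSeries.X) = 1 := by
  have : ps x = ∑ i, fun k : ℕ+ => x i ^ (k : ℕ) := by ext; simp [ps]
  rw [this, Hs_sum, ← Finset.prod_mul_distrib]
  simp [Hs_pow_mul]

theorem hZ_ps_skip {N : ℕ} (x : Fin N → B) (k : Fin N) (a : ℕ) :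
    ∑ j ∈ Finset.range N, hZ R (ps x) ((a : ℤ) - j) *
      PowerSeries.coeff j (∏ i ∈ Finset.univ.erase k, (1 - PowerSeries.C (x i) * PowerSeries.X))
      = x k ^ a := by
  have hN : N = (N - 1) + 1 := by have := k.2; omega
  have := coeff_Hs_mul (R := R) (ps x)
    (∏ i ∈ Finset.univ.erase k, (1 - PowerSeries.C (x i) * PowerSeries.X)) (N-1)
    (fun j hj => coeff_prod_lin _ _ _ (by simpa using hj)) a
  rw [← hN] at this
  rw [← this]
  have h1 := Hs_ps (R := R) x
  rw [← Finset.mul_prod_erase _ _ (Finset.mem_univ k)] at h1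
  have h2 := Hs_pow_mul (R := R) (x k)
  have : Hs R (ps x) * ∏ i ∈ Finset.univ.erase k, (1 - PowerSeries.C (x i) * PowerSeries.X)
      = Hs R (fun n : ℕ+ => x k ^ (n : ℕ)) := by
    calc _ = (Hs R (fun n : ℕ+ => x k ^ (n : ℕ)) * (1 - PowerSeries.C (x k) * PowerSeries.X)) * 
        (Hs R (ps x) * ∏ i ∈ Finset.univ.erase k, (1 - PowerSeries.C (x i) * PowerSeries.X)) := by
          rw [h2, one_mul]
      _ = Hs R (fun n : ℕ+ => x k ^ (n : ℕ)) * (Hs R (ps x) * ((1 - PowerSeries.C (x k) * PowerSeries.X) * ∏ i ∈ Finset.univ.erase k, (1 - PowerSeries.C (x i) * PowerSeries.X))) := by ring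
      _ = _ := by rw [h1, mul_one]
  rw [this, Hs_pow]; simp

/-- h-determinant -/
def detH (R : Type) [Field R] {B : Type} [CommRing B] [Algebra R B] (c : ℕ+ → B) {N : ℕ}
    (a : Fin N → ℕ) : B :=
  Matrix.det (Matrix.of fun i j : Fin N => hZ R c ((a i : ℤ) + (j : ℤ) - ((N : ℤ) - 1)))

/-- the staircase -/
def dl {N : ℕ} (i : Fin N) : ℕ := N - 1 - i

def alt {B : Type} [CommRing B] {N : ℕ} (x : Fin N → B) (a : Fin N → ℕ) : B :=
  Matrix.det (Matrix.of fun i k : Fin N => x k ^ (a i))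

theorem detH_delta (c : ℕ+ → B) {N : ℕ} : detH R c (dl (N := N)) = 1 := by
  unfold detH
  rw [Matrix.det_of_upperTriangular]
  · apply Finset.prod_eq_one
    intro i _
    have : ((dl i : ℕ) : ℤ) + (i : ℤ) - ((N : ℤ) - 1) = (0 : ℕ) := by
      have := i.2; unfold dl; omega
    rw [Matrix.of_apply, this, hZ_nat, hA_zero]
  · intro i j hij
    rw [Matrix.of_apply, hZ_neg]
    have := i.2; have := j.2
    have : (j : ℕ) < i := hij
    unfold dl; omega

theorem bialternant {N : ℕ} (x : Fin N → B) (a : Fin N → ℕ) :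
    detH R (ps x) a * alt x dl = alt x a := by
  let M : Matrix (Fin N) (Fin N) B := Matrix.of fun j k =>
    PowerSeries.coeff (N - 1 - j) (∏ i ∈ Finset.univ.erase k, (1 - PowerSeries.C (x i) * PowerSeries.X))
  have key : ∀ a : Fin N → ℕ, detH R (ps x) a * M.det = alt x a := by
    intro a
    unfold detH alt
    rw [← Matrix.det_mul]
    congr 1
    ext i k
    rw [Matrix.mul_apply, Matrix.of_apply, ← hZ_ps_skip (R := R) x k (a i), Finset.sum_range,
      ← Equiv.sum_comp Fin.revPerm]
    refine Finset.sum_congr rfl fun j _ => ?_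
    have hj := j.2
    simp only [M, Matrix.of_apply, Fin.revPerm_apply, Fin.val_rev]
    congr 2
    · omega
    · congr 1; omega
  have h1 := key dl
  rw [detH_delta, one_mul] at h1
  rw [← h1, key]

theorem alt_delta_ne_zero [IsDomain B] {N : ℕ} (x : Fin N → B) (hx : Function.Injective x) :
    alt x dl ≠ 0 := by
  have h := Matrix.det_vandermonde_ne_zero_iff.2 hx
  intro h0
  apply h
  have : Matrix.of (fun i k : Fin N => x k ^ (dl i)) =
      (Matrix.vandermonde x).transpose.submatrix Fin.revPerm id := by
    ext i k
    simp [Matrix.vandermonde, dl]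
    congr 1; omega
  unfold alt at h0
  rw [this, Matrix.det_permute, Matrix.det_transpose] at h0
  have hs : ((Equiv.Perm.sign (Fin.revPerm (n := N)) : ℤ) : B) ≠ 0 := by
    rcases Int.units_eq_one_or (Equiv.Perm.sign (Fin.revPerm (n := N))) with h | h <;> simp [h]
  exact (mul_eq_zero.1 h0).resolve_left hs

end PartA
end MacProof
end

noncomputable section
namespace MacProof

section PartB
variable {R : Type} [Field R] [CharZero R]
variable {B : Type} [CommRing B] [Algebra R B]

abbrev pw : ℕ+ → ℕ := fun k => (k : ℕ)

abbrev WH (f : SymFn R) (e : ℕ) : Prop := IsWeightedHomogeneous pw f e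

theorem graded_aeval (F : ℕ → Submodule R B) [SetLike.GradedMonoid F] (c : ℕ+ → B)
    (hc : ∀ k : ℕ+, c k ∈ F k) {f : SymFn R} {e : ℕ} (hf : WH f e) : aeval c f ∈ F e := by
  rw [aeval_def, eval₂_eq]
  refine Submodule.sum_mem _ fun d hd => ?_
  rw [← Algebra.smul_def]
  refine Submodule.smul_mem _ _ ?_
  have h1 := hf (mem_support_iff.1 hd)
  rw [← h1, Finsupp.weight_apply, Finsupp.sum]
  simpa using SetLike.prod_pow_mem_graded F (fun k : ℕ+ => (k : ℕ)) c (fun k : ℕ+ => (d k))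
    (F := d.support) (fun k _ => hc k)

theorem hsym_WH (n : ℕ) : WH (hsym (R := R) n) n := by
  induction n using Nat.strong_induction_on with
  | _ n ih =>
    cases n with
    | zero => rw [hsym]; exact isWeightedHomogeneous_one _ _
    | succ n =>
      rw [hsym, smul_eq_C_mul]
      apply IsWeightedHomogeneous.C_mul
      apply IsWeightedHomogeneous.sum
      intro i hi
      have hi := Finset.mem_range.1 hi
      have h1 := isWeightedHomogeneous_X R pw (⟨i+1, Nat.succ_pos i⟩ : ℕ+)
      have := h1.mul (ih (n - i) (by omega))
      convert this using 1
      simp only [pw, PNat.mk_coe]; omega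

theorem hX (n : ℕ) : hA R (fun k => (X k : SymFn R)) n = hsym n := by
  unfold hA; exact aeval_X_left_apply _

theorem detH_WH {N : ℕ} (a : Fin N → ℕ) (e : ℕ) (h : ∑ i, a i = e + ∑ i : Fin N, dl i) :
    WH (detH R (fun k => (X k : SymFn R)) a) e := by
  unfold detH
  rw [Matrix.det_apply]
  apply IsWeightedHomogeneous.sum
  intro σ _
  have key : WH (∏ i, hZ R (fun k => (X k : SymFn R)) ((a (σ i) : ℤ) + (i : ℤ) - ((N : ℤ) - 1))) e := by
    by_cases hneg : ∃ i, (a (σ i) : ℤ) + ((i : Fin N) : ℤ) - ((N : ℤ) - 1) < 0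
    · obtain ⟨i, hi⟩ := hneg
      rw [Finset.prod_eq_zero (Finset.mem_univ i) (hZ_neg _ _ hi)]
      exact isWeightedHomogeneous_zero _ _ _
    · push Not at hneg
      have h2 : ∀ i ∈ Finset.univ, WH (hZ R (fun k => (X k : SymFn R)) ((a (σ i) : ℤ) + ((i : Fin N) : ℤ) - ((N : ℤ) - 1)))
          (((a (σ i) : ℤ) + ((i : Fin N) : ℤ) - ((N : ℤ) - 1)).toNat) := by
        intro i _
        obtain ⟨n, hn⟩ := Int.eq_ofNat_of_zero_le (hneg i)
        rw [hn, hZ_nat, hX, Int.toNat_natCast]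
        exact hsym_WH n
      have h3 := IsWeightedHomogeneous.prod _ _ _ h2
      convert h3 using 1
      have : ((∑ i : Fin N, (((a (σ i) : ℤ) + ((i : Fin N) : ℤ) - ((N : ℤ) - 1)).toNat) : ℕ) : ℤ) = e := by
        rw [Nat.cast_sum, Finset.sum_congr rfl (fun i _ => Int.toNat_of_nonneg (hneg i))]
        have hs : ∑ i, (a (σ i) : ℤ) = ∑ i, (a i : ℤ) := Equiv.sum_comp σ (fun i => (a i : ℤ))
        have hd : ∑ i : Fin N, ((i : ℤ) - ((N : ℤ) - 1)) = - ∑ i : Fin N, ((dl i : ℕ) : ℤ) := by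
          rw [← Finset.sum_neg_distrib]
          refine Finset.sum_congr rfl fun i _ => ?_
          have := i.2; unfold dl; omega
        simp only [add_sub_assoc]
        rw [Finset.sum_add_distrib, hs, hd]
        have h' : (∑ i, (a i : ℤ)) = e + ∑ i : Fin N, ((dl i : ℕ) : ℤ) := by exact_mod_cast h
        rw [h']; ring
      exact_mod_cast this.symm
  rcases Int.units_eq_one_or (Equiv.Perm.sign σ) with hs | hs
  · rw [hs, one_smul]; exact key
  · rw [hs]; simp only [Units.neg_smul, one_smul]
    exact ((weightedHomogeneousSubmodule R pw e).neg_mem key)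

/-- restriction to `N` variables -/
def piN (R : Type) [Field R] (N : ℕ) : SymFn R →ₐ[R] MvPolynomial (Fin N) R :=
  aeval (ps (fun i => (X i : MvPolynomial (Fin N) R)))

theorem piN_hom {N e : ℕ} {f : SymFn R} (hf : WH f e) : (piN R N f).IsHomogeneous e := by
  have := graded_aeval (homogeneousSubmodule (Fin N) R)
    (ps (fun i => (X i : MvPolynomial (Fin N) R))) (fun k => ?_) hf
  · exact this
  · rw [mem_homogeneousSubmodule]
    unfold ps
    apply IsHomogeneous.sum
    intro i _
    simpa using (isHomogeneous_X R i).pow (k : ℕ)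

theorem chain {N : ℕ} (d : Derivation R B B) (c : ℕ+ → B) (hc : ∀ k : ℕ+, N < k → c k = 0)
    (f : SymFn R) :
    d (aeval c f) = ∑ j : Fin N, aeval c (pderiv (Nat.succPNat j) f) * d (c (Nat.succPNat j)) := by
  induction f using MvPolynomial.induction_on with
  | C r => simp
  | add f g hf hg => simp [hf, hg, add_mul, Finset.sum_add_distrib]
  | mul_X f n hf =>
    simp only [map_mul, aeval_X, Derivation.leibniz, smul_eq_mul, map_add, add_mul,
      Finset.sum_add_distrib, hf]
    by_cases hn : N < n
    · simp only [hc n hn, map_zero, mul_zero, zero_mul, Finset.sum_const_zero, add_zero, zero_add]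
      symm; apply Finset.sum_eq_zero
      intro j _
      rw [pderiv_X, Pi.single_eq_of_ne]
      · simp
      · intro h; rw [h] at hn; simp at hn; have := j.2; omega
    · push Not at hn
      have hn1 := n.pos
      let j0 : Fin N := ⟨n - 1, by omega⟩
      have hj0 : Nat.succPNat j0 = n := by
        apply PNat.coe_injective; simp [j0]; omega
      congr 1
      · rw [Finset.sum_eq_single j0]
        · rw [hj0]; simp
        · intro j _ hj
          rw [pderiv_X, Pi.single_eq_of_ne]
          · simp
          · intro h; apply hj; apply Fin.ext
            rw [← hj0] at h
            have := Nat.succPNat_injective h; exact this.symm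
        · simp
      · rw [Finset.mul_sum]
        exact Finset.sum_congr rfl fun j _ => by ring

theorem aeval_trunc {N e : ℕ} (h : e ≤ N) (c : ℕ+ → B) {f : SymFn R} (hf : WH f e) :
    aeval (fun k : ℕ+ => if (k : ℕ) ≤ N then c k else 0) f = aeval c f := by
  rw [aeval_def, eval₂_eq, aeval_def, eval₂_eq]
  refine Finset.sum_congr rfl fun d hd => ?_
  congr 1
  refine Finset.prod_congr rfl fun k hk => ?_
  have h1 := hf (mem_support_iff.1 hd)
  have h2 : (k : ℕ) ≤ Finsupp.weight pw d := Finsupp.le_weight_of_ne_zero' pw (Finsupp.mem_support_iff.1 hk)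
  rw [if_pos]; omega

theorem piN_pderiv {N e : ℕ} (hN : e ≤ N) {f : SymFn R} (hf : WH f e) (h : piN R N f = 0)
    (k : ℕ+) (hk : (k : ℕ) ≤ e) : piN R N (pderiv k f) = 0 := by
  set c := (ps (fun i => (X i : MvPolynomial (Fin N) R))) with hc
  set c' := (fun k : ℕ+ => if (k : ℕ) ≤ N then c k else 0) with hc'
  have h0 : aeval c' f = 0 := by rw [hc', aeval_trunc hN c hf]; exact h
  have hch := fun i : Fin N => chain (N := N) (pderiv i) c' (fun k hk => by simp [hc', hk]) f
  have hd : ∀ i j : Fin N, pderiv i (c' (Nat.succPNat j)) =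
      (((j : ℕ) + 1 : ℕ) : MvPolynomial (Fin N) R) * X i ^ (j : ℕ) := by
    intro i j
    have hj : (j : ℕ) + 1 ≤ N := j.2
    simp only [hc', hc, Nat.succPNat_coe, Nat.succ_eq_add_one, hj, if_true, ps, map_sum, pderiv_pow]
    rw [Finset.sum_eq_single i]
    · simp
    · intro b _ hb; rw [pderiv_X_of_ne hb]; simp
    · simp
  have hm : (Matrix.vandermonde (fun i => (X i : MvPolynomial (Fin N) R))).mulVec
      (fun j : Fin N => aeval c' (pderiv (Nat.succPNat j) f) * (((j : ℕ) + 1 : ℕ) : MvPolynomial (Fin N) R)) = 0 := by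
    ext1 i
    have := hch i
    rw [h0, map_zero] at this
    simp only [Matrix.mulVec, dotProduct, Matrix.vandermonde_apply, Pi.zero_apply]
    rw [this]
    refine Finset.sum_congr rfl fun j _ => ?_
    rw [hd]; ring
  have hz := Matrix.eq_zero_of_mulVec_eq_zero
    (Matrix.det_vandermonde_ne_zero_iff.2 (X_injective)) hm
  have hk1 := k.pos
  have hz1 := congrFun hz (⟨k - 1, by omega⟩ : Fin N)
  have hkk : Nat.succPNat (k - 1 : ℕ) = k := by apply PNat.coe_injective; simp; omega
  simp only [Pi.zero_apply, hkk] at hz1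
  have hz2 : aeval c' (pderiv k f) = 0 := by
    refine (mul_eq_zero.1 hz1).resolve_right ?_
    exact Nat.cast_ne_zero.2 (Nat.succ_ne_zero _)
  have : WH (pderiv k f) (e - k) := IsWeightedHomogeneous.pderiv hf (by simp [pw]; omega)
  rw [hc', aeval_trunc (by omega) c this] at hz2
  exact hz2

theorem piN_inj {N e : ℕ} (hN : e ≤ N) {f : SymFn R} (hf : WH f e) (h : piN R N f = 0) : f = 0 := by
  induction e using Nat.strong_induction_on generalizing f with
  | _ e ih =>
    rw [MvPolynomial.eq_zero_iff]
    intro d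
    by_contra hd
    have hw := hf hd
    by_cases h0 : d = 0
    · have he : e = 0 := by rw [← hw, h0]; simp
      subst he
      have hfc : f = C (coeff 0 f) := by
        ext m
        rw [coeff_C]
        split_ifs with hm
        · rw [hm]
        · by_contra hm'
          have := hf hm'
          apply hm
          symm
          by_contra hne
          obtain ⟨k, hk⟩ := Finsupp.ne_iff.1 hne
          have h2 : (k : ℕ) ≤ Finsupp.weight pw m := Finsupp.le_weight_of_ne_zero' pw hk
          have := k.pos
          omega
      rw [hfc, piN, aeval_C] at h
      have : coeff 0 f = 0 := by
        rw [MvPolynomial.algebraMap_eq] at h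
        exact (C_eq_zero).1 h
      rw [h0] at hd
      exact hd this
    · obtain ⟨k, hk⟩ := Finsupp.ne_iff.1 h0
      have h2 : (k : ℕ) ≤ Finsupp.weight pw d := Finsupp.le_weight_of_ne_zero' pw hk
      rw [hw] at h2
      have hk1 := k.pos
      have h3 : WH (pderiv k f) (e - k) := IsWeightedHomogeneous.pderiv hf (by simp [pw]; omega)
      have h4 := ih (e - k) (by omega) (by omega) h3 (piN_pderiv hN hf h k h2)
      have h5 := coeff_pderiv f (d - Finsupp.single k 1) (i := k)
      rw [h4, coeff_zero] at h5
      have hle : Finsupp.single k 1 ≤ d := by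
        rw [Finsupp.single_le_iff]; exact Nat.one_le_iff_ne_zero.2 hk
      rw [tsub_add_cancel_of_le hle] at h5
      rcases mul_eq_zero.1 h5.symm with h6 | h6
      · exact hd h6
      · exact Nat.cast_add_one_ne_zero _ h6

/-- the straightening map -/
def LN (R : Type) [Field R] (N : ℕ) : MvPolynomial (Fin N) R →ₗ[R] SymFn R :=
  (basisMonomials (Fin N) R).constr R
    (fun α => detH R (fun k => (X k : SymFn R)) (fun i => α i + dl i))

theorem LN_monomial {N : ℕ} (α : Fin N →₀ ℕ) (r : R) :
    LN R N (monomial α r) = r • detH R (fun k => (X k : SymFn R)) (fun i => α i + dl i) := by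
  have : (monomial α r : MvPolynomial (Fin N) R) = r • basisMonomials (Fin N) R α := by
    simp [smul_monomial]
  rw [this, map_smul, LN, Module.Basis.constr_basis]

theorem LN_hom {N e : ℕ} {g : MvPolynomial (Fin N) R} (hg : g.IsHomogeneous e) :
    WH (LN R N g) e := by
  rw [g.as_sum, map_sum]
  apply IsWeightedHomogeneous.sum
  intro α hα
  rw [LN_monomial, smul_eq_C_mul]
  apply IsWeightedHomogeneous.C_mul
  apply detH_WH
  rw [Finset.sum_add_distrib]
  congr 1
  have := hg (mem_support_iff.1 hα)
  rw [← this, Finsupp.weight_apply, Finsupp.sum_fintype] <;> simp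

theorem aeval_detH {c : ℕ+ → B} {N : ℕ} (a : Fin N → ℕ) :
    aeval c (detH R (fun k => (X k : SymFn R)) a) = detH R c a := by
  unfold detH
  rw [AlgHom.map_det]
  congr 1
  ext i j
  simp only [AlgHom.mapMatrix_apply, Matrix.map_apply, Matrix.of_apply]
  rw [← hInt_eq, hZ_eq]

def xdl (R : Type) [Field R] (N : ℕ) : MvPolynomial (Fin N) R :=
  ∏ i, X i ^ dl i

def antiS {N : ℕ} (g : MvPolynomial (Fin N) R) : MvPolynomial (Fin N) R :=
  ∑ σ : Equiv.Perm (Fin N), ((Equiv.Perm.sign σ : ℤ) : MvPolynomial (Fin N) R) * rename σ g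

theorem antiS_add {N : ℕ} (g h : MvPolynomial (Fin N) R) : antiS (g + h) = antiS g + antiS h := by
  simp [antiS, mul_add, Finset.sum_add_distrib]

theorem piN_LN {N : ℕ} (g : MvPolynomial (Fin N) R) :
    piN R N (LN R N g) * alt (fun i => (X i : MvPolynomial (Fin N) R)) dl = antiS (xdl R N * g) := by
  induction g using MvPolynomial.induction_on' with
  | monomial α r =>
    rw [LN_monomial, map_smul, piN, aeval_detH, smul_mul_assoc, bialternant]
    unfold alt antiS
    rw [← Matrix.det_transpose, Matrix.det_apply', Finset.smul_sum]
    refine Finset.sum_congr rfl fun σ _ => ?_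
    rw [← mul_smul_comm]
    congr 1
    rw [map_mul, rename_monomial]
    simp only [Matrix.transpose_apply, Matrix.of_apply, xdl, map_prod, map_pow, rename_X]
    rw [← rename_monomial, monomial_eq, Finsupp.prod_fintype _ _ (by simp)]
    simp only [map_mul, map_prod, map_pow, rename_X, rename_C, pow_add, Finset.prod_mul_distrib]
    rw [smul_eq_C_mul]; ring
  | add g h hg hh => rw [map_add, map_add, add_mul, hg, hh, mul_add, antiS_add]

theorem antiS_mul {N : ℕ} (g r : MvPolynomial (Fin N) R)
    (hr : ∀ σ : Equiv.Perm (Fin N), rename σ r = r) : antiS (g * r) = antiS g * r := by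
  unfold antiS
  rw [Finset.sum_mul]
  refine Finset.sum_congr rfl fun σ _ => ?_
  rw [map_mul, hr, mul_assoc]

theorem piN_LN_mul {N : ℕ} (g r : MvPolynomial (Fin N) R)
    (hr : ∀ σ : Equiv.Perm (Fin N), rename σ r = r) :
    piN R N (LN R N (g * r)) = piN R N (LN R N g) * r := by
  have h := alt_delta_ne_zero (fun i => (X i : MvPolynomial (Fin N) R)) X_injective
  apply mul_right_cancel₀ h
  rw [piN_LN, ← mul_assoc, antiS_mul _ _ hr, ← piN_LN]; ring

theorem piN_symm {N : ℕ} (f : SymFn R) (σ : Equiv.Perm (Fin N)) : rename σ (piN R N f) = piN R N f := by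
  unfold piN
  rw [← AlgHom.comp_apply]
  congr 1
  apply MvPolynomial.algHom_ext
  intro k
  simp only [AlgHom.comp_apply, aeval_X, ps, map_sum, map_pow, rename_X]
  exact Equiv.sum_comp σ (fun i => (X i : MvPolynomial (Fin N) R) ^ (k : ℕ))

theorem LN_mul {N a b : ℕ} (hN : a + b ≤ N) {g : MvPolynomial (Fin N) R} (hg : g.IsHomogeneous a)
    {f : SymFn R} (hf : WH f b) : LN R N (g * piN R N f) = LN R N g * f := by
  rw [← sub_eq_zero]
  apply piN_inj hN
  · exact (weightedHomogeneousSubmodule R pw (a + b)).sub_mem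
      (LN_hom (hg.mul (piN_hom hf))) ((LN_hom hg).mul hf)
  · rw [map_sub, piN_LN_mul _ _ (piN_symm f), map_mul, sub_self]

theorem LN_one {N : ℕ} : LN R N 1 = 1 := by
  have : (1 : MvPolynomial (Fin N) R) = monomial 0 1 := rfl
  rw [this, LN_monomial, one_smul]
  simp only [Finsupp.coe_zero, Pi.zero_apply, zero_add]
  exact detH_delta _

theorem LN_piN {N e : ℕ} (hN : e ≤ N) {f : SymFn R} (hf : WH f e) : LN R N (piN R N f) = f := by
  have := LN_mul (N := N) (a := 0) (by omega) (isHomogeneous_one (Fin N) R) hf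
  rwa [one_mul, LN_one, one_mul] at this

end PartB
end MacProof
end

noncomputable section
namespace MacProof

section PartC
variable {R : Type} [Field R] [CharZero R]
variable {B : Type} [CommRing B] [Algebra R B]

theorem chain_ev (d : Derivation R B B) (c : ℕ+ → B) (f : SymFn R) :
    ∃ N0 : ℕ, ∀ N, N0 ≤ N → d (aeval c f) =
      ∑ j ∈ Finset.range N, aeval c (pderiv (Nat.succPNat j) f) * d (c (Nat.succPNat j)) := by
  induction f using MvPolynomial.induction_on with
  | C r => exact ⟨0, fun N _ => by simp⟩
  | add f g hf hg =>
    obtain ⟨a, ha⟩ := hf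
    obtain ⟨b, hb⟩ := hg
    refine ⟨max a b, fun N hN => ?_⟩
    simp only [map_add, add_mul, Finset.sum_add_distrib]
    rw [ha N (le_trans (le_max_left _ _) hN), hb N (le_trans (le_max_right _ _) hN)]
  | mul_X f n hf =>
    obtain ⟨a, ha⟩ := hf
    refine ⟨max a n, fun N hN => ?_⟩
    simp only [map_mul, aeval_X, Derivation.leibniz, smul_eq_mul, map_add, add_mul,
      Finset.sum_add_distrib]
    rw [ha N (le_trans (le_max_left _ _) hN)]
    have hn : (n : ℕ) ≤ N := le_trans (le_max_right _ _) hN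
    have hn1 := n.pos
    have hj0 : Nat.succPNat (n - 1 : ℕ) = n := by
      apply PNat.coe_injective; simp; omega
    congr 1
    · rw [Finset.sum_eq_single (n - 1 : ℕ)]
      · rw [hj0]; simp
      · intro j _ hj
        rw [pderiv_X, Pi.single_eq_of_ne]
        · simp
        · intro h; apply hj
          rw [← hj0] at h
          have := Nat.succPNat_injective h; exact this.symm
      · intro h; exact absurd (Finset.mem_range.2 (by omega)) h
    · rw [Finset.mul_sum]
      exact Finset.sum_congr rfl fun j _ => by ring

/-- the functions `g_m` -/
def gT (t : R) (m : ℕ) : SymFn R := hA R (fun k : ℕ+ => C (1 - t⁻¹ ^ (k : ℕ)) * (X k : SymFn R)) m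

def tau (q : R) : SymFn R →ₐ[R] Polynomial (SymFn R) :=
  aeval fun k : ℕ+ => Polynomial.C (X k : SymFn R) +
    Polynomial.C (C (q ^ (k : ℕ) - 1) : SymFn R) * Polynomial.X ^ (k : ℕ)

def tauC (q : R) (m : ℕ) : SymFn R →ₗ[R] SymFn R :=
  ((Polynomial.lcoeff (SymFn R) m).restrictScalars R) ∘ₗ (tau q).toLinearMap

theorem tauC_apply (q : R) (m : ℕ) (f : SymFn R) : tauC q m f = (tau q f).coeff m := rfl

def Eop (q t : R) : SymFn R →ₗ[R] SymFn R where
  toFun f := (tau q f).sum fun m c => c * gT t m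
  map_add' f g := by
    rw [map_add, Polynomial.sum_add_index] <;> simp [add_mul]
  map_smul' r f := by
    rw [map_smul, RingHom.id_apply, Polynomial.sum_smul_index']
    · rw [Polynomial.sum, Polynomial.sum, Finset.smul_sum]
      simp
    · simp

theorem Eop_eq (q t : R) (f : SymFn R) (n : ℕ) (hn : (tau q f).natDegree < n) :
    Eop q t f = ∑ m ∈ Finset.range n, tauC q m f * gT t m := by
  show (tau q f).sum (fun m c => c * gT t m) = _
  rw [Polynomial.sum_over_range' _ _ n hn]
  · rfl
  · simp

theorem tauC_rec (q : R) (m : ℕ) (f : SymFn R) :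
    ((m : SymFn R) + 1) * tauC q (m+1) f = ∑ i ∈ Finset.range (m+1),
      C (((i : R) + 1) * (q ^ (i+1) - 1)) * tauC q (m - i) (pderiv (Nat.succPNat i) f) := by
  obtain ⟨N0, h⟩ := chain_ev (R := R)
    ((Polynomial.derivative' (R := SymFn R)).restrictScalars R)
    (fun k : ℕ+ => Polynomial.C (X k : SymFn R) +
    Polynomial.C (C (q ^ (k : ℕ) - 1) : SymFn R) * Polynomial.X ^ (k : ℕ)) f
  have h1 := congrArg (fun p => Polynomial.coeff p m) (h (max N0 (m+1)) (le_max_left _ _))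
  have hd : ∀ p : Polynomial (SymFn R),
    ((Polynomial.derivative' (R := SymFn R)).restrictScalars R) p = Polynomial.derivative p :=
    fun p => rfl
  simp only [hd, Polynomial.finset_sum_coeff, Polynomial.coeff_derivative] at h1
  rw [mul_comm, tauC_apply]
  refine Eq.trans h1 ?_
  symm
  apply Finset.sum_subset_zero_on_sdiff
  · intro i hi; simp at hi ⊢; omega
  · intro i hi
    have hi' : m < i := by simp at hi; omega
    simp only [Polynomial.derivative_add, Polynomial.derivative_C, zero_add,
      Polynomial.derivative_C_mul_X_pow, Nat.succPNat_coe, Nat.succ_eq_add_one, Nat.add_sub_cancel]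
    rw [← mul_assoc, Polynomial.coeff_mul_X_pow', if_neg (by omega)]
  · intro i hi
    have hi' : i ≤ m := by simp at hi; omega
    simp only [Polynomial.derivative_add, Polynomial.derivative_C, zero_add,
      Polynomial.derivative_C_mul_X_pow, Nat.succPNat_coe, Nat.succ_eq_add_one, Nat.add_sub_cancel]
    rw [← mul_assoc, Polynomial.coeff_mul_X_pow', if_pos hi', Polynomial.coeff_mul_C, tauC_apply]
    unfold tau
    simp only [map_mul, map_add, map_one, map_natCast, Nat.cast_add, Nat.cast_one]
    ring

theorem tauC_zero (q : R) (f : SymFn R) : tauC q 0 f = f := by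
  rw [tauC_apply]
  have : ∀ p : Polynomial (SymFn R), p.coeff 0 = Polynomial.aeval (R := SymFn R) 0 p := by
    intro p; rw [Polynomial.aeval_def, Polynomial.eval₂_at_zero]; simp
  rw [this]
  have h2 : ((Polynomial.aeval (R := SymFn R) (0 : SymFn R)).restrictScalars R).comp (tau q) = AlgHom.id R _ := by
    apply MvPolynomial.algHom_ext
    intro k
    simp [tau]
  exact DFunLike.congr_fun h2 f

theorem gT_zero (t : R) : gT t 0 = 1 := hA_zero _

theorem gT_rec (t : R) (n : ℕ) : ((n : SymFn R) + 1) * gT t (n+1) =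
    ∑ i ∈ Finset.range (n+1), (C (1 - t⁻¹ ^ (i+1)) * X (Nat.succPNat i)) * gT t (n - i) := by
  unfold gT
  exact hA_rec _ n

/-! inner product -/

theorem inner_sum (q t : R) (f g : SymFn R) (S : Finset (ℕ+ →₀ ℕ)) (hS : f.support ⊆ S) :
    innerQT q t f g = ∑ m ∈ S, coeff m f * coeff m g * zwtQT q t m := by
  unfold innerQT
  apply Finset.sum_subset hS
  intro m _ hm
  rw [notMem_support_iff.1 hm]; ring

theorem inner_symm (q t : R) (f g : SymFn R) : innerQT q t f g = innerQT q t g f := by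
  classical
  rw [inner_sum q t f g _ (Finset.subset_union_left (s₂ := g.support)),
    inner_sum q t g f _ (Finset.subset_union_right (s₁ := f.support))]
  exact Finset.sum_congr rfl fun m _ => by ring

theorem inner_add_left (q t : R) (f f' g : SymFn R) :
    innerQT q t (f + f') g = innerQT q t f g + innerQT q t f' g := by
  classical
  rw [inner_sum q t f g _ (Finset.subset_union_left (s₂ := f'.support)),
    inner_sum q t f' g _ (Finset.subset_union_right (s₁ := f.support)),
    inner_sum q t (f + f') g _ support_add, ← Finset.sum_add_distrib]
  exact Finset.sum_congr rfl fun m _ => by rw [coeff_add]; ring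

theorem inner_smul_left (q t : R) (r : R) (f g : SymFn R) :
    innerQT q t (r • f) g = r * innerQT q t f g := by
  rw [inner_sum q t (r • f) g f.support support_smul, innerQT, Finset.mul_sum]
  exact Finset.sum_congr rfl fun m _ => by rw [coeff_smul, smul_eq_mul]; ring

/-- bundled inner product -/
def ip (q t : R) : SymFn R →ₗ[R] SymFn R →ₗ[R] R :=
  LinearMap.mk₂ R (innerQT q t) (inner_add_left q t) (inner_smul_left q t)
    (fun f g g' => by rw [inner_symm, inner_add_left, inner_symm q t g, inner_symm q t g'])
    (fun r f g => by rw [inner_symm, inner_smul_left, inner_symm]; rfl)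

theorem ip_apply (q t : R) (f g : SymFn R) : ip q t f g = innerQT q t f g := rfl

theorem ip_symm (q t : R) (f g : SymFn R) : ip q t f g = ip q t g f := inner_symm q t f g

theorem ip_monomial (q t : R) (a : ℕ+ →₀ ℕ) (r : R) (g : SymFn R) :
    ip q t (monomial a r) g = r * coeff a g * zwtQT q t a := by
  classical
  rw [ip_apply, inner_sum q t _ g {a} support_monomial_subset]
  simp

theorem zwt_ne (q t : R) (hq : ∀ k : ℕ+, q ^ (k : ℕ) ≠ 1) (ht : ∀ k : ℕ+, t ^ (k : ℕ) ≠ 1)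
    (a : ℕ+ →₀ ℕ) : zwtQT q t a ≠ 0 := by
  unfold zwtQT
  refine Finset.prod_ne_zero_iff.2 fun k _ => ?_
  have h1 : 1 - q ^ (k : ℕ) ≠ 0 := sub_ne_zero.2 (hq k).symm
  have h2 : 1 - t ^ (k : ℕ) ≠ 0 := sub_ne_zero.2 (ht k).symm
  have h3 : ((k : ℕ) : R) ≠ 0 := Nat.cast_ne_zero.2 k.ne_zero
  have h4 : (Nat.factorial (a k) : R) ≠ 0 := Nat.cast_ne_zero.2 (Nat.factorial_ne_zero _)
  positivity

theorem ip_nondeg (q t : R) (hq : ∀ k : ℕ+, q ^ (k : ℕ) ≠ 1) (ht : ∀ k : ℕ+, t ^ (k : ℕ) ≠ 1)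
    (g : SymFn R) (h : ∀ f, ip q t f g = 0) : g = 0 := by
  rw [MvPolynomial.eq_zero_iff]
  intro a
  have := h (monomial a 1)
  rw [ip_monomial, one_mul] at this
  exact (mul_eq_zero.1 this).resolve_right (zwt_ne q t hq ht a)

theorem zwt_succ (q t : R) (a : ℕ+ →₀ ℕ) (k : ℕ+) :
    zwtQT q t (a + Finsupp.single k 1) =
      (((k : ℕ) : R) * ((1 - q ^ (k : ℕ)) / (1 - t ^ (k : ℕ)))) * ((a k : R) + 1) * zwtQT q t a := by
  classical
  have key : ∀ b : ℕ+ →₀ ℕ, b.support ⊆ insert k a.support → zwtQT q t b =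
      ((Nat.factorial (b k) : R) * ((k : ℕ) : R) ^ (b k) *
      ((1 - q ^ (k : ℕ)) / (1 - t ^ (k : ℕ))) ^ (b k)) *
      ∏ j ∈ (insert k a.support).erase k, ((Nat.factorial (b j) : R) * ((j : ℕ) : R) ^ (b j) *
      ((1 - q ^ (j : ℕ)) / (1 - t ^ (j : ℕ))) ^ (b j)) := by
    intro b hb
    rw [Finset.mul_prod_erase (insert k a.support) (fun j : ℕ+ => ((Nat.factorial (b j) : R) * ((j : ℕ) : R) ^ (b j) *
      ((1 - q ^ (j : ℕ)) / (1 - t ^ (j : ℕ))) ^ (b j))) (Finset.mem_insert_self _ _)]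
    unfold zwtQT
    apply Finset.prod_subset hb
    intro j _ hj
    rw [Finsupp.notMem_support_iff.1 hj]; simp
  rw [key a (Finset.subset_insert _ _), key (a + Finsupp.single k 1)]
  · have : ∏ j ∈ (insert k a.support).erase k, ((Nat.factorial ((a + Finsupp.single k 1 : ℕ+ →₀ ℕ) j) : R) *
        ((j : ℕ) : R) ^ ((a + Finsupp.single k 1 : ℕ+ →₀ ℕ) j) *
      ((1 - q ^ (j : ℕ)) / (1 - t ^ (j : ℕ))) ^ ((a + Finsupp.single k 1 : ℕ+ →₀ ℕ) j)) =
      ∏ j ∈ (insert k a.support).erase k, ((Nat.factorial (a j) : R) * ((j : ℕ) : R) ^ (a j) *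
      ((1 - q ^ (j : ℕ)) / (1 - t ^ (j : ℕ))) ^ (a j)) := by
      refine Finset.prod_congr rfl fun j hj => ?_
      have hjk : j ≠ k := (Finset.mem_erase.1 hj).1
      simp [Finsupp.single_apply, hjk.symm]
    rw [this]
    simp only [Finsupp.add_apply, Finsupp.single_eq_same, Nat.factorial_succ, pow_succ]
    push_cast; ring
  · intro j hj
    rcases Finset.mem_union.1 (Finsupp.support_add hj) with h | h
    · exact Finset.mem_insert_of_mem h
    · have := Finsupp.support_single_subset h
      rw [Finset.mem_singleton] at this
      rw [this]; exact Finset.mem_insert_self _ _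

theorem ip_X (q t : R) (k : ℕ+) (f g : SymFn R) :
    ip q t (X k * f) g = (((k : ℕ) : R) * ((1 - q ^ (k : ℕ)) / (1 - t ^ (k : ℕ)))) *
      ip q t f (pderiv k g) := by
  induction f using MvPolynomial.induction_on' with
  | monomial a r =>
    have : (X k * monomial a r : SymFn R) = monomial (a + Finsupp.single k 1) r := by
      rw [mul_comm, X, monomial_mul, mul_one]
    rw [this, ip_monomial, ip_monomial, zwt_succ, coeff_pderiv]; ring
  | add f f' hf hf' => rw [mul_add, map_add, map_add, LinearMap.add_apply, LinearMap.add_apply, hf, hf', mul_add]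

theorem ip_g (q t : R) (h0 : t ≠ 0) (ht : ∀ k : ℕ+, t ^ (k : ℕ) ≠ 1) (m : ℕ) (f g : SymFn R) :
    ip q t (gT t m * f) g = t⁻¹ ^ m * ip q t f (tauC q m g) := by
  induction m using Nat.strong_induction_on generalizing f g with
  | _ m ih =>
    cases m with
    | zero => rw [gT_zero, tauC_zero]; simp
    | succ m =>
      have hm : ((m : R) + 1) ≠ 0 := Nat.cast_add_one_ne_zero m
      apply mul_left_cancel₀ hm
      have e1 : ((m : R) + 1) * ip q t (gT t (m+1) * f) g =
          ip q t ((((m : SymFn R) + 1) * gT t (m+1)) * f) g := by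
        rw [← smul_eq_mul, ← LinearMap.smul_apply, ← map_smul, smul_eq_C_mul]
        congr 2
        simp [mul_assoc]
      have e2 : ((m : R) + 1) * (t⁻¹ ^ (m+1) * ip q t f (tauC q (m+1) g)) =
          t⁻¹ ^ (m+1) * ip q t f (((m : SymFn R) + 1) * tauC q (m+1) g) := by
        have : (((m : SymFn R) + 1) * tauC q (m+1) g) = ((m : R) + 1) • tauC q (m+1) g := by
          rw [smul_eq_C_mul]; simp
        rw [this, map_smul, smul_eq_mul]; ring
      rw [e1, e2, gT_rec, tauC_rec, Finset.sum_mul, map_sum, map_sum, LinearMap.sum_apply, Finset.mul_sum]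
      refine Finset.sum_congr rfl fun i hi => ?_
      have hi' : i ≤ m := by simp at hi; omega
      have e3 : C (1 - t⁻¹ ^ (i + 1)) * X i.succPNat * gT t (m - i) * f =
        (1 - t⁻¹ ^ (i + 1)) • (X i.succPNat * (gT t (m - i) * f)) := by
        rw [smul_eq_C_mul]; ring
      rw [e3, map_smul, LinearMap.smul_apply, ip_X, ih (m - i) (by omega), ← smul_eq_C_mul, map_smul,
        smul_eq_mul, smul_eq_mul]
      have h2 : 1 - t ^ (i + 1) ≠ 0 := sub_ne_zero.2 (ht (Nat.succPNat i)).symm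
      simp only [Nat.succPNat_coe, Nat.succ_eq_add_one]
      have h3 : t⁻¹ ^ (m + 1) = t⁻¹ ^ (i+1) * t⁻¹ ^ (m - i) := by rw [← pow_add]; congr 1; omega
      have h4 : (1 - t⁻¹ ^ (i + 1)) * ((1 - q ^ (i+1)) / (1 - t ^ (i+1))) = t⁻¹ ^ (i+1) * (q ^ (i+1) - 1) := by
        have : t ^ (i+1) ≠ 0 := pow_ne_zero _ h0
        rw [inv_pow]; field_simp; ring
      rw [h3]
      push_cast
      linear_combination (((i : R) + 1) * t⁻¹ ^ (m - i) * ip q t f (tauC q (m - i) (pderiv i.succPNat g))) * h4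

theorem E_adj (q t : R) (h0 : t ≠ 0) (ht : ∀ k : ℕ+, t ^ (k : ℕ) ≠ 1) (f g : SymFn R) :
    ip q t (Eop q t f) g = ip q t f (Eop q t g) := by
  have h1 := Eop_eq q t f (max (tau q f).natDegree (tau q g).natDegree + 1)
    (by have := le_max_left (tau q f).natDegree (tau q g).natDegree; omega)
  have h2 := Eop_eq q t g (max (tau q f).natDegree (tau q g).natDegree + 1)
    (by have := le_max_right (tau q f).natDegree (tau q g).natDegree; omega)
  rw [h1, h2, map_sum, map_sum, LinearMap.sum_apply]
  refine Finset.sum_congr rfl fun m _ => ?_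
  rw [mul_comm, ip_g q t h0 ht, mul_comm (tauC q m g), ip_symm q t f, ip_g q t h0 ht,
    ip_symm q t (tauC q m g)]

end PartC
end MacProof
end

noncomputable section
namespace MacProof

section PartD
variable {R : Type} [Field R] [CharZero R]
variable {B : Type} [CommRing B] [Algebra R B]

/-- Toeplitz matrix of a power series -/
def Toep (N : ℕ) (F : PowerSeries B) : Matrix (Fin N) (Fin N) B :=
  Matrix.of fun r j => if (r : ℕ) ≤ j then PowerSeries.coeff ((j : ℕ) - r) F else 0

theorem Toep_mul (N : ℕ) (F G : PowerSeries B) : Toep N F * Toep N G = Toep N (F * G) := by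
  ext r i
  simp only [Matrix.mul_apply, Toep, Matrix.of_apply]
  rw [← Finset.sum_range (n := N) (fun j => (if (r : ℕ) ≤ j then PowerSeries.coeff (j - r) F else 0) *
    (if j ≤ (i : ℕ) then PowerSeries.coeff (i - j) G else 0))]
  split_ifs with h
  · rw [PowerSeries.coeff_mul, Finset.Nat.sum_antidiagonal_eq_sum_range_succ
      (fun a b => PowerSeries.coeff a F * PowerSeries.coeff b G)]
    have hsub : Finset.Ico (r : ℕ) (i + 1) ⊆ Finset.range N := by
      intro j hj; have := i.2; simp at hj ⊢; omega
    rw [← Finset.sum_subset hsub]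
    · rw [Finset.sum_Ico_eq_sum_range]
      have : (i : ℕ) + 1 - r = i - r + 1 := by omega
      rw [this]
      refine Finset.sum_congr rfl fun k hk => ?_
      simp only [Finset.mem_range] at hk
      rw [if_pos (by omega), if_pos (by omega)]
      congr 3 <;> omega
    · intro j _ hj
      simp only [Finset.mem_Ico, not_and_or, not_le, not_lt] at hj
      rcases hj with hj | hj
      · rw [if_neg (by omega), zero_mul]
      · rw [if_neg (c := j ≤ (i : ℕ)) (by omega), mul_zero]
  · apply Finset.sum_eq_zero
    intro j _
    by_cases h1 : (r : ℕ) ≤ j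
    · rw [if_neg (c := j ≤ (i : ℕ)) (by omega), mul_zero]
    · rw [if_neg h1, zero_mul]

theorem Toep_one (N : ℕ) : Toep N (1 : PowerSeries B) = 1 := by
  ext r i
  simp only [Toep, Matrix.of_apply, PowerSeries.coeff_one, Matrix.one_apply, Fin.ext_iff]
  split_ifs <;> first | rfl | omega

/-- signed elementary functions -/
def ebar (R : Type) [Field R] [CharZero R] (d : ℕ) : SymFn R := hA R (fun k => -(X k : SymFn R)) d

theorem Hs_neg : Hs R (fun k => (X k : SymFn R)) * Hs R (fun k => -(X k : SymFn R)) = 1 := by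
  rw [← Hs_add, ← Hs_zero (R := R)]
  congr 1
  ext1 k
  simp

theorem det_upd {n : ℕ} (U V : Matrix (Fin n) (Fin n) B) (h : U * V = 1) (hd : U.det = 1)
    (i : Fin n) (b : Fin n → B) : (U.updateRow i b).det = ∑ j, V j i * b j := by
  have hadj : U.adjugate = V := by
    calc U.adjugate = U.adjugate * (U * V) := by rw [h, mul_one]
      _ = V := by rw [← mul_assoc, Matrix.adjugate_mul, hd, one_smul, one_mul]
  rw [← Matrix.cramer_transpose_apply, Matrix.cramer_eq_adjugate_mulVec, ← Matrix.adjugate_transpose, hadj]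
  rfl

theorem Toep_entry {N : ℕ} (c : ℕ+ → B) (r j : Fin N) :
    Toep N (Hs R c) r j = hZ R c ((dl r : ℤ) + (j : ℤ) - ((N : ℤ) - 1)) := by
  have hr := r.2
  have hj := j.2
  simp only [Toep, Matrix.of_apply]
  split_ifs with h
  · have : ((dl r : ℤ) + (j : ℤ) - ((N : ℤ) - 1)) = ((j - r : ℕ) : ℤ) := by unfold dl; omega
    rw [this, hZ_nat]; simp [Hs]
  · rw [hZ_neg]; unfold dl; omega

theorem LN_single {N m : ℕ} (i : Fin N) :
    LN R N (X i ^ m) = ∑ d ∈ Finset.range (i + 1), ebar R d * hZ R (fun k => (X k : SymFn R)) ((m : ℤ) - d) := by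
  rw [X_pow_eq_monomial, LN_monomial, one_smul]
  have hU : (Toep N (Hs R (fun k => (X k : SymFn R)))).det = 1 := by
    rw [← detH_delta (R := R) (fun k => (X k : SymFn R)) (N := N)]
    unfold detH
    congr 1
    ext1 r j
    rw [Toep_entry, Matrix.of_apply]
  have h1 := det_upd (Toep N (Hs R (fun k => (X k : SymFn R)))) (Toep N (Hs R (fun k => -(X k : SymFn R))))
    (by rw [Toep_mul, Hs_neg, Toep_one]) hU i
    (fun j => hZ R (fun k => (X k : SymFn R)) ((m : ℤ) + j - i))
  have h2 : detH R (fun k => (X k : SymFn R)) (fun r => (Finsupp.single i m) r + dl r) =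
     ((Toep N (Hs R (fun k => (X k : SymFn R)))).updateRow i
      (fun j => hZ R (fun k => (X k : SymFn R)) ((m : ℤ) + j - i))).det := by
    unfold detH
    congr 1
    ext1 r j
    by_cases hr : r = i
    · subst hr
      rw [Matrix.updateRow_self, Matrix.of_apply]
      congr 1
      have := r.2
      simp only [Finsupp.single_eq_same, dl]
      omega
    · rw [Matrix.updateRow_ne hr, Toep_entry, Matrix.of_apply]
      congr 1
      simp [Ne.symm hr]
  rw [h2, h1]
  simp only [Toep, Matrix.of_apply]
  rw [← Finset.sum_range (n := N) (fun j => (if j ≤ (i : ℕ) then PowerSeries.coeff (i - j) (Hs R (fun k => -(X k : SymFn R))) else 0) *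
    hZ R (fun k => (X k : SymFn R)) ((m : ℤ) + j - i))]
  have hsub : Finset.range ((i : ℕ) + 1) ⊆ Finset.range N := by
    intro j hj; have := i.2; simp at hj ⊢; omega
  rw [← Finset.sum_subset hsub]
  · rw [← Finset.sum_range_reflect]
    refine Finset.sum_congr rfl fun d hd => ?_
    simp only [Finset.mem_range] at hd
    rw [if_pos (by omega)]
    congr 1
    · simp only [Hs, PowerSeries.coeff_mk, ebar]
      congr 1; omega
    · congr 1; omega
  · intro j _ hj
    rw [if_neg (by simp at hj; omega), zero_mul]

theorem abel (s : R) (a : ℕ → SymFn R) (N : ℕ) :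
    ∑ i ∈ Finset.range N, (s ^ i - s ^ (i+1)) • ∑ d ∈ Finset.range (i+1), a d =
      ∑ d ∈ Finset.range N, (s ^ d - s ^ N) • a d := by
  induction N with
  | zero => simp
  | succ N ih =>
    rw [Finset.sum_range_succ, ih, Finset.smul_sum, Finset.sum_range_succ, Finset.sum_range_succ,
      ← add_assoc, ← Finset.sum_add_distrib]
    congr 1
    refine Finset.sum_congr rfl fun d _ => ?_
    rw [← add_smul]; congr 1; ring

theorem conv_sum (s : R) (m N : ℕ) (h : m < N) :
    ∑ d ∈ Finset.range N, s ^ d • (ebar R d * hZ R (fun k => (X k : SymFn R)) ((m : ℤ) - d)) =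
      PowerSeries.coeff m (Hs R (fun k => (X k : SymFn R)) * Hs R (fun k : ℕ+ => C s ^ (k : ℕ) * -(X k : SymFn R))) := by
  rw [mul_comm, PowerSeries.coeff_mul, Finset.Nat.sum_antidiagonal_eq_sum_range_succ
      (fun a b => PowerSeries.coeff a (Hs R (fun k : ℕ+ => C s ^ (k : ℕ) * -(X k : SymFn R))) * PowerSeries.coeff b (Hs R (fun k => (X k : SymFn R))))]
  have hsub : Finset.range (m + 1) ⊆ Finset.range N := by
    intro j hj; simp at hj ⊢; omega
  rw [← Finset.sum_subset hsub]
  · refine Finset.sum_congr rfl fun d hd => ?_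
    simp only [Finset.mem_range] at hd
    have : ((m : ℤ) - d) = ((m - d : ℕ) : ℤ) := by omega
    rw [this, hZ_nat]
    simp only [Hs, PowerSeries.coeff_mk, ebar, hA_scale]
    rw [smul_eq_C_mul, map_pow]; ring
  · intro d _ hd
    rw [hZ_neg, mul_zero, smul_zero]
    simp at hd; omega

theorem gT_LN {N m : ℕ} (t : R) (h1 : 1 ≤ m) (hN : m ≤ N) :
    ∑ i : Fin N, (t⁻¹ ^ (i : ℕ) - t⁻¹ ^ ((i : ℕ) + 1)) • LN R N (X i ^ m) = gT t m := by
  simp only [LN_single]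
  rw [← Finset.sum_range (n := N) (fun i => (t⁻¹ ^ i - t⁻¹ ^ (i + 1)) • ∑ d ∈ Finset.range (i + 1),
    ebar R d * hZ R (fun k => (X k : SymFn R)) ((m : ℤ) - d)), abel]
  have : ∑ d ∈ Finset.range N, (t⁻¹ ^ d - t⁻¹ ^ N) • (ebar R d * hZ R (fun k => (X k : SymFn R)) ((m : ℤ) - d)) =
    ∑ d ∈ Finset.range (N + 1), (t⁻¹ ^ d - t⁻¹ ^ N) • (ebar R d * hZ R (fun k => (X k : SymFn R)) ((m : ℤ) - d)) := by
    rw [Finset.sum_range_succ, sub_self, zero_smul, add_zero]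
  rw [this]
  simp only [sub_smul]
  rw [Finset.sum_sub_distrib, ← Finset.smul_sum, conv_sum _ _ _ (by omega)]
  have h2 := conv_sum (1 : R) m (N+1) (by omega)
  simp only [one_pow, one_smul, map_one, one_mul] at h2
  rw [h2, Hs_neg, PowerSeries.coeff_one, if_neg (by omega), smul_zero, sub_zero, ← Hs_add]
  simp only [gT, Hs, PowerSeries.coeff_mk]
  congr 1
  ext1 k
  simp only [Pi.add_apply, map_sub, map_one, map_pow]; ring

/-! homogeneity of tau -/

def tauF (R : Type) [Field R] (e : ℕ) : Submodule R (Polynomial (SymFn R)) where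
  carrier := {p | ∀ m s, coeff s (p.coeff m) ≠ 0 → Finsupp.weight pw s + m = e}
  zero_mem' := by simp
  add_mem' := by
    intro p p' hp hp' m s h
    rw [Polynomial.coeff_add, coeff_add] at h
    by_cases h1 : coeff s (p.coeff m) = 0
    · rw [h1, zero_add] at h; exact hp' m s h
    · exact hp m s h1
  smul_mem' := by
    intro r p hp m s h
    rw [Polynomial.coeff_smul, coeff_smul, smul_eq_mul] at h
    exact hp m s (right_ne_zero_of_mul h)

instance : SetLike.GradedMonoid (tauF R) where
  one_mem := by
    intro m s h
    rw [Polynomial.coeff_one] at h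
    split_ifs at h with h1
    · rw [coeff_one] at h
      split_ifs at h with h2
      · rw [← h2, h1]; simp
      · exact absurd rfl h
    · simp at h
  mul_mem := by
    intro a b p p' hp hp' m s h
    classical
    rw [Polynomial.coeff_mul, coeff_sum] at h
    obtain ⟨⟨i, j⟩, hij, h⟩ := Finset.exists_ne_zero_of_sum_ne_zero h
    rw [coeff_mul] at h
    obtain ⟨⟨u, v⟩, huv, h⟩ := Finset.exists_ne_zero_of_sum_ne_zero h
    have h1 := hp i u (left_ne_zero_of_mul h)
    have h2 := hp' j v (right_ne_zero_of_mul h)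
    rw [Finset.HasAntidiagonal.mem_antidiagonal] at hij huv
    simp only at hij huv
    rw [← huv, ← hij, map_add]; omega

theorem tau_mem (q : R) {f : SymFn R} {e : ℕ} (hf : WH f e) : tau q f ∈ tauF R e := by
  refine graded_aeval (tauF R) _ (fun k => ?_) hf
  apply Submodule.add_mem
  · intro m s h
    rw [Polynomial.coeff_C] at h
    split_ifs at h with h1
    · have := isWeightedHomogeneous_X R pw k h
      rw [this, h1]; rfl
    · simp at h
  · intro m s h
    rw [Polynomial.coeff_C_mul_X_pow] at h
    split_ifs at h with h1
    · have := isWeightedHomogeneous_C pw (q ^ (k : ℕ) - 1) h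
      rw [this, h1]; simp
    · simp at h

theorem tauC_WH (q : R) {f : SymFn R} {e m : ℕ} (hf : WH f e) (hm : m ≤ e) : WH (tauC q m f) (e - m) := by
  intro s h
  have := tau_mem q hf m s h
  omega

theorem tau_deg (q : R) {f : SymFn R} {e : ℕ} (hf : WH f e) : (tau q f).natDegree < e + 1 := by
  rw [Nat.lt_add_one_iff, Polynomial.natDegree_le_iff_coeff_eq_zero]
  intro m hm
  ext s
  rw [coeff_zero]
  by_contra h
  have := tau_mem q hf m s h
  omega

def Tq {N : ℕ} (q : R) (i : Fin N) : MvPolynomial (Fin N) R →ₐ[R] MvPolynomial (Fin N) R :=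
  aeval fun j => if j = i then C q * X j else X j

theorem Tq_monomial {N : ℕ} (q : R) (i : Fin N) (α : Fin N →₀ ℕ) (r : R) :
    Tq q i (monomial α r) = q ^ (α i) • monomial α r := by
  classical
  unfold Tq
  rw [aeval_monomial, monomial_eq, Finsupp.prod_fintype _ _ (by simp), Finsupp.prod_fintype _ _ (by simp)]
  have : ∀ j, (if j = i then C q * X j else X j : MvPolynomial (Fin N) R) ^ α j =
      (if j = i then C (q ^ α i) else 1) * X j ^ α j := by
    intro j
    split_ifs with h
    · rw [mul_pow, h, map_pow]
    · rw [one_mul]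
  simp only [this, Finset.prod_mul_distrib]
  rw [Finset.prod_ite_eq' Finset.univ i, if_pos (Finset.mem_univ _), smul_eq_C_mul, MvPolynomial.algebraMap_eq]
  ring

theorem Tq_piN {N : ℕ} (q : R) (i : Fin N) (f : SymFn R) :
    Tq q i (piN R N f) = Polynomial.eval₂ (piN R N : SymFn R →+* MvPolynomial (Fin N) R) (X i) (tau q f) := by
  induction f using MvPolynomial.induction_on with
  | C r =>
    have : (C r : SymFn R) = algebraMap R _ r := rfl
    have h2 : algebraMap R (Polynomial (SymFn R)) r = Polynomial.C (C r) := rfl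
    rw [this, AlgHom.commutes, AlgHom.commutes, AlgHom.commutes, h2, Polynomial.eval₂_C]
    exact ((piN R N).commutes r).symm
  | add f g hf hg => rw [map_add, map_add, map_add, Polynomial.eval₂_add, hf, hg]
  | mul_X f k hf =>
    rw [map_mul, map_mul, map_mul, Polynomial.eval₂_mul, hf]
    congr 1
    simp only [tau, aeval_X, Polynomial.eval₂_add, Polynomial.eval₂_mul, Polynomial.eval₂_C,
      Polynomial.eval₂_X_pow, RingHom.coe_coe, piN, ps, aeval_C, map_sum, map_pow, Tq]
    classical
    rw [MvPolynomial.algebraMap_eq, ← Finset.add_sum_erase _ _ (Finset.mem_univ i),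
      ← Finset.add_sum_erase _ (fun j => (X j : MvPolynomial (Fin N) R) ^ (k : ℕ)) (Finset.mem_univ i)]
    rw [if_pos rfl]
    have : ∀ j ∈ Finset.univ.erase i, (if j = i then C q * X j else X j : MvPolynomial (Fin N) R) ^ (k : ℕ) = X j ^ (k : ℕ) := by
      intro j hj; rw [if_neg (Finset.ne_of_mem_erase hj)]
    rw [Finset.sum_congr rfl this, mul_pow]
    simp only [map_sub, map_pow, map_one]; ring

/-- eigenvalues -/
def epsN {N : ℕ} (q t : R) (α : Fin N → ℕ) : R :=
  1 + ∑ i : Fin N, (t⁻¹ ^ (i : ℕ) - t⁻¹ ^ ((i : ℕ) + 1)) * (q ^ (α i) - 1)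

def Dop (N : ℕ) (q t : R) : MvPolynomial (Fin N) R →ₗ[R] MvPolynomial (Fin N) R :=
  LinearMap.id + ∑ i : Fin N, (t⁻¹ ^ (i : ℕ) - t⁻¹ ^ ((i : ℕ) + 1)) • ((Tq q i).toLinearMap - LinearMap.id)

theorem Dop_monomial {N : ℕ} (q t : R) (α : Fin N →₀ ℕ) (r : R) :
    Dop N q t (monomial α r) = epsN q t α • monomial α r := by
  simp only [Dop, epsN, LinearMap.add_apply, LinearMap.sum_apply, LinearMap.smul_apply, LinearMap.sub_apply,
    LinearMap.id_apply, AlgHom.toLinearMap_apply, Tq_monomial]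
  rw [add_smul, one_smul, Finset.sum_smul]
  congr 1
  refine Finset.sum_congr rfl fun i _ => ?_
  rw [mul_smul, sub_smul (q ^ α i), one_smul]

theorem Eop_LN {N e : ℕ} (hN : e ≤ N) (q t : R) {f : SymFn R} (hf : WH f e) :
    Eop q t f = LN R N (Dop N q t (piN R N f)) := by
  rw [Eop_eq q t f (e+1) (tau_deg q hf)]
  have h1 : ∀ i : Fin N, LN R N (Tq q i (piN R N f) - piN R N f) =
      ∑ m ∈ Finset.range e, tauC q (m+1) f * LN R N (X i ^ (m+1)) := by
    intro i
    rw [Tq_piN, Polynomial.eval₂_eq_sum_range' _ (tau_deg q hf), Finset.sum_range_succ', pow_zero, mul_one]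
    have : ((piN R N : SymFn R →+* MvPolynomial (Fin N) R) ((tau q f).coeff 0)) = piN R N f := by
      rw [← tauC_apply, tauC_zero]; rfl
    rw [this, add_sub_cancel_right, map_sum]
    refine Finset.sum_congr rfl fun m hm => ?_
    have hm : m < e := Finset.mem_range.1 hm
    rw [mul_comm, mul_comm (tauC q (m+1) f)]
    have h2 := LN_mul (N := N) (a := m + 1) (b := e - (m+1)) (by omega)
      (g := X i ^ (m+1)) (by simpa using (isHomogeneous_X R i).pow (m+1)) (tauC_WH q (m := m+1) hf (by omega))
    exact h2
  have h3 : LN R N (Dop N q t (piN R N f)) = f + ∑ i : Fin N, (t⁻¹ ^ (i : ℕ) - t⁻¹ ^ ((i : ℕ) + 1)) •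
      ∑ m ∈ Finset.range e, tauC q (m+1) f * LN R N (X i ^ (m+1)) := by
    simp only [Dop, LinearMap.add_apply, LinearMap.sum_apply, LinearMap.smul_apply, LinearMap.sub_apply,
      LinearMap.id_apply, AlgHom.toLinearMap_apply]
    rw [map_add, LN_piN hN hf, map_sum]
    congr 1
    refine Finset.sum_congr rfl fun i _ => ?_
    rw [map_smul, h1]
  rw [h3, Finset.sum_range_succ', tauC_zero, gT_zero, mul_one, add_comm]
  congr 1
  simp only [Finset.smul_sum]
  rw [Finset.sum_comm]
  refine Finset.sum_congr rfl fun m hm => ?_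
  have hm : m < e := Finset.mem_range.1 hm
  rw [← gT_LN (N := N) t (m := m+1) (by omega) (by omega), Finset.mul_sum]
  refine Finset.sum_congr rfl fun i _ => ?_
  rw [mul_smul_comm]

end PartD
end MacProof
end

noncomputable section
namespace MacProof

section PartE

/-- rows of a partition -/
def row (lam : Multiset ℕ+) (i : ℕ) : ℕ := (descParts lam).getD i 0

theorem descParts_pairwise (lam : Multiset ℕ+) : (descParts lam).Pairwise (· ≥ ·) := by
  unfold descParts
  rw [List.pairwise_reverse]
  exact Multiset.pairwise_sort _ _

theorem descParts_coe (lam : Multiset ℕ+) :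
    ((descParts lam : List ℕ) : Multiset ℕ) = lam.map fun a : ℕ+ => (a : ℕ) := by
  unfold descParts
  rw [Multiset.coe_reverse, Multiset.sort_eq]

theorem descParts_length (lam : Multiset ℕ+) : (descParts lam).length = Multiset.card lam := by
  rw [← Multiset.coe_card, descParts_coe, Multiset.card_map]

theorem descParts_unique (lam : Multiset ℕ+) (L : List ℕ) (hL : L.Pairwise (· ≥ ·))
    (h : (L : Multiset ℕ) = lam.map fun a : ℕ+ => (a : ℕ)) : descParts lam = L := by
  have hp : (descParts lam).Perm L := by
    rw [← Multiset.coe_eq_coe, descParts_coe, h]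
  exact hp.eq_of_pairwise' (descParts_pairwise lam) hL

theorem row_eq_zero {lam : Multiset ℕ+} {i : ℕ} (h : Multiset.card lam ≤ i) : row lam i = 0 := by
  unfold row
  rw [List.getD_eq_default]
  rw [descParts_length]; exact h

theorem row_pos {lam : Multiset ℕ+} {i : ℕ} (h : i < Multiset.card lam) : 0 < row lam i := by
  unfold row
  rw [← descParts_length] at h
  rw [List.getD_eq_getElem _ _ h]
  have : (descParts lam)[i] ∈ ((descParts lam : List ℕ) : Multiset ℕ) := List.getElem_mem h
  rw [descParts_coe, Multiset.mem_map] at this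
  obtain ⟨a, _, ha⟩ := this
  rw [← ha]; exact a.pos

theorem row_anti (lam : Multiset ℕ+) : Antitone (row lam) := by
  intro i j hij
  by_cases hj : j < Multiset.card lam
  · rcases hij.eq_or_lt with h | h
    · rw [h]
    · unfold row
      rw [← descParts_length] at hj
      rw [List.getD_eq_getElem _ _ hj, List.getD_eq_getElem _ _ (h.trans hj)]
      exact List.pairwise_iff_getElem.1 (descParts_pairwise lam) i j (h.trans hj) hj h
  · rw [row_eq_zero (not_lt.1 hj)]; exact Nat.zero_le _

theorem row_inj {lam mu : Multiset ℕ+} (h : ∀ i, row lam i = row mu i) : lam = mu := by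
  have hc : Multiset.card lam = Multiset.card mu := by
    apply le_antisymm
    · by_contra hc
      have h1 := row_pos (not_le.1 hc)
      rw [h, row_eq_zero le_rfl] at h1
      exact lt_irrefl _ h1
    · by_contra hc
      have h1 := row_pos (not_le.1 hc)
      rw [← h, row_eq_zero le_rfl] at h1
      exact lt_irrefl _ h1
  have hd : descParts lam = descParts mu := by
    apply List.ext_getElem
    · rw [descParts_length, descParts_length, hc]
    · intro i h1 h2
      have := h i
      unfold row at this
      rwa [List.getD_eq_getElem _ _ h1, List.getD_eq_getElem _ _ h2] at this
  have h2 := descParts_coe lam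
  rw [hd, descParts_coe] at h2
  exact Multiset.map_injective PNat.coe_injective h2.symm

theorem pSum_eq (lam : Multiset ℕ+) (k : ℕ) : pSum lam k = ∑ i ∈ Finset.range k, row lam i := by
  unfold pSum row
  induction k with
  | zero => simp
  | succ k ih =>
    rw [Finset.sum_range_succ, ← ih]
    by_cases hk : k < (descParts lam).length
    · rw [List.take_succ_eq_append_getElem hk, List.sum_append, List.getD_eq_getElem _ _ hk]
      simp
    · push Not at hk
      rw [List.take_of_length_le hk, List.take_of_length_le (by omega), List.getD_eq_default _ _ hk, add_zero]

theorem wt_eq {lam : Multiset ℕ+} {N : ℕ} (h : Multiset.card lam ≤ N) :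
    wt lam = ∑ i ∈ Finset.range N, row lam i := by
  rw [← pSum_eq]
  unfold pSum wt
  rw [← descParts_length] at h
  rw [List.take_of_length_le h, ← descParts_coe, Multiset.sum_coe]

theorem card_le_wt (lam : Multiset ℕ+) : Multiset.card lam ≤ wt lam := by
  rw [wt_eq le_rfl]
  calc Multiset.card lam = ∑ i ∈ Finset.range (Multiset.card lam), 1 := by simp
    _ ≤ _ := Finset.sum_le_sum fun i hi => row_pos (Finset.mem_range.1 hi)

theorem exists_row (b : ℕ → ℕ) (hb : Antitone b) (N : ℕ) (hN : ∀ i, N ≤ i → b i = 0) :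
    ∃ mu : Multiset ℕ+, Multiset.card mu ≤ N ∧ ∀ i, row mu i = b i := by
  classical
  have hex : ∃ k, b k = 0 := ⟨N, hN N le_rfl⟩
  set k := Nat.find hex with hk
  have hk0 : ∀ i, k ≤ i → b i = 0 := fun i hi =>
    Nat.le_zero.1 ((hb hi).trans (Nat.find_spec hex).le)
  have hkp : ∀ i, i < k → 0 < b i := fun i hi => Nat.pos_of_ne_zero (Nat.find_min hex hi)
  let fb : Fin k → ℕ+ := fun i => (⟨b i, hkp i i.2⟩ : ℕ+)
  let L : List ℕ+ := List.ofFn fb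
  have hL : (L.map fun a : ℕ+ => (a : ℕ)) = List.ofFn (fun i : Fin k => b i) := by
    rw [List.map_ofFn]; rfl
  have hd : descParts (L : Multiset ℕ+) = List.ofFn (fun i : Fin k => b i) := by
    apply descParts_unique
    · rw [List.pairwise_ofFn]
      intro i j hij
      exact hb hij.le
    · rw [Multiset.map_coe, hL]
  refine ⟨(L : Multiset ℕ+), ?_, ?_⟩
  · rw [Multiset.coe_card, List.length_ofFn]
    exact Nat.find_min' hex (hN N le_rfl)
  · intro i
    unfold row
    rw [hd]
    by_cases hi : i < k
    · rw [List.getD_eq_getElem _ _ (by simpa using hi), List.getElem_ofFn]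
    · rw [List.getD_eq_default _ _ (by simpa using hi), hk0 i (not_lt.1 hi)]

/-! dominance -/

theorem dom_refl_of_pSum {lam mu : Multiset ℕ+} (h : ∀ k, pSum mu k = pSum lam k) : mu = lam := by
  apply row_inj
  intro i
  have h1 := h (i+1)
  have h2 := h i
  rw [pSum_eq, pSum_eq, Finset.sum_range_succ, Finset.sum_range_succ, ← pSum_eq, ← pSum_eq, h2] at h1
  omega

theorem dom_trans {lam mu nu : Multiset ℕ+} (h1 : StrictDom nu mu) (h2 : StrictDom mu lam) :
    StrictDom nu lam := by
  refine ⟨?_, h1.2.1.trans h2.2.1, fun k => (h1.2.2 k).trans (h2.2.2 k)⟩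
  intro h
  subst h
  exact h1.1 (dom_refl_of_pSum fun k => le_antisymm (h1.2.2 k) (h2.2.2 k))

theorem pSum_top {lam : Multiset ℕ+} {k : ℕ} (h : Multiset.card lam ≤ k) : pSum lam k = wt lam := by
  rw [pSum_eq, wt_eq h]

def dmeas (lam : Multiset ℕ+) : ℕ := ∑ k ∈ Finset.range (wt lam), pSum lam k

theorem dmeas_lt {lam mu : Multiset ℕ+} (h : StrictDom mu lam) : dmeas mu < dmeas lam := by
  unfold dmeas
  rw [h.2.1]
  apply Finset.sum_lt_sum (fun k _ => h.2.2 k)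
  by_contra hc
  push Not at hc
  apply h.1
  apply dom_refl_of_pSum
  intro k
  by_cases hk : k < wt lam
  · exact le_antisymm (h.2.2 k) (hc k (Finset.mem_range.2 hk))
  · push Not at hk
    rw [pSum_top ((card_le_wt lam).trans hk), pSum_top ((card_le_wt mu).trans (h.2.1.le.trans hk)), h.2.1]

theorem dom_card {lam mu : Multiset ℕ+} (h : StrictDom mu lam) : Multiset.card lam ≤ Multiset.card mu := by
  by_contra hc
  push Not at hc
  have h1 := h.2.2 (Multiset.card mu)
  rw [pSum_top le_rfl, h.2.1, ← pSum_top le_rfl, pSum_eq, pSum_eq] at h1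
  have h2 : ∑ i ∈ Finset.range (Multiset.card mu + 1), row lam i ≤ ∑ i ∈ Finset.range (Multiset.card lam), row lam i :=
    Finset.sum_le_sum_of_subset (Finset.range_mono hc)
  rw [Finset.sum_range_succ] at h2
  have := row_pos hc
  omega

variable {R : Type} [Field R] [CharZero R]

def rowF (N : ℕ) (lam : Multiset ℕ+) (i : Fin N) : ℕ := row lam i

theorem schur_detH {lam : Multiset ℕ+} {N : ℕ} (h : Multiset.card lam ≤ N) :
    detH R (fun k => (X k : SymFn R)) (fun i : Fin N => rowF N lam i + dl i) = schur lam := by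
  obtain ⟨k, rfl⟩ := Nat.exists_eq_add_of_le h
  set n := Multiset.card lam with hn
  unfold detH
  rw [← Matrix.det_submatrix_equiv_self finSumFinEquiv]
  have hM : ∀ i j : Fin (n + k), ((rowF (n+k) lam i + dl i : ℕ) : ℤ) + (j : ℤ) - (((n + k : ℕ) : ℤ) - 1) =
      (row lam i : ℤ) + (j : ℤ) - (i : ℤ) := by
    intro i j; have := i.2; unfold dl rowF; omega
  have h3 : (Matrix.submatrix (Matrix.of fun i j : Fin (n + k) => hZ R (fun k => (X k : SymFn R))
      (((rowF (n+k) lam i + dl i : ℕ) : ℤ) + (j : ℤ) - (((n + k : ℕ) : ℤ) - 1))) finSumFinEquiv finSumFinEquiv) =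
      Matrix.fromBlocks
       (Matrix.of fun i j : Fin n => hInt (R := R) ((row lam i : ℤ) + (j : ℤ) - (i : ℤ)))
       (Matrix.of fun (i : Fin n) (j : Fin k) => hInt (R := R) ((row lam i : ℤ) + ((n + j : ℕ) : ℤ) - (i : ℤ)))
       0
       (Matrix.of fun i j : Fin k => hInt (R := R) ((j : ℤ) - (i : ℤ))) := by
    ext1 i j
    rw [Matrix.submatrix_apply, Matrix.of_apply, hM, ← hInt_eq]
    rcases i with i | i <;> rcases j with j | j
    · simp
    · simp
    · simp only [finSumFinEquiv_apply_right, finSumFinEquiv_apply_left, Matrix.fromBlocks_apply₂₁, Matrix.zero_apply]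
      rw [hInt, if_neg]
      have := j.2
      rw [row_eq_zero (by simp [← hn])]
      simp; omega
    · simp only [finSumFinEquiv_apply_right, Matrix.fromBlocks_apply₂₂, Matrix.of_apply]
      rw [row_eq_zero (by simp [← hn])]
      congr 1
      simp
  rw [h3, Matrix.det_fromBlocks_zero₂₁]
  have h4 : (Matrix.of fun i j : Fin k => hInt (R := R) ((j : ℤ) - (i : ℤ))).det = 1 := by
    rw [Matrix.det_of_upperTriangular]
    · apply Finset.prod_eq_one
      intro i _
      simp [hInt, hsym]
    · intro i j hij
      rw [Matrix.of_apply, hInt, if_neg]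
      have : (j : ℕ) < i := hij
      omega
  rw [h4, mul_one]
  rfl

theorem detH_straight {N : ℕ} (a : Fin N → ℕ) (ha : Function.Injective a) :
    ∃ (σ : Equiv.Perm (Fin N)) (mu : Multiset ℕ+), Multiset.card mu ≤ N ∧
      (∀ i, a (σ i) = rowF N mu i + dl i) ∧
      detH R (fun k => (X k : SymFn R)) a = ((Equiv.Perm.sign σ : ℤ) : R) • schur mu := by
  let σ : Equiv.Perm (Fin N) := Tuple.sort (fun i => OrderDual.toDual (a i))
  have hσ : Antitone (a ∘ σ) := fun i j hij =>
    (Tuple.monotone_sort (fun i => OrderDual.toDual (a i))) hij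
  have hs : StrictAnti (a ∘ σ) := hσ.strictAnti_of_injective (ha.comp σ.injective)
  have hge : ∀ i : Fin N, dl i ≤ a (σ i) := by
    have : ∀ d : ℕ, ∀ i : Fin N, (i : ℕ) + d + 1 = N → d ≤ a (σ i) := by
      intro d
      induction d with
      | zero => intro i _; exact Nat.zero_le _
      | succ d ih =>
        intro i hi
        have h1 := ih ⟨i + 1, by omega⟩ (by simp; omega)
        have h2 : a (σ ⟨i + 1, by omega⟩) < a (σ i) := hs (by rw [Fin.lt_def]; simp)
        omega
    intro i
    apply this
    have := i.2; unfold dl; omega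
  let b : ℕ → ℕ := fun i => if h : i < N then a (σ ⟨i, h⟩) - dl (⟨i, h⟩ : Fin N) else 0
  have hb : Antitone b := by
    apply antitone_nat_of_succ_le
    intro i
    simp only [b]
    by_cases h1 : i + 1 < N
    · rw [dif_pos h1, dif_pos (by omega)]
      have h2 : a (σ ⟨i + 1, h1⟩) < a (σ ⟨i, by omega⟩) := hs (by rw [Fin.lt_def]; simp)
      unfold dl; simp only; omega
    · rw [dif_neg h1]; exact Nat.zero_le _
  obtain ⟨mu, hmu, hr⟩ := exists_row b hb N (fun i hi => by simp only [b]; rw [dif_neg (by omega)])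
  have hai : ∀ i, a (σ i) = rowF N mu i + dl i := by
    intro i
    unfold rowF
    rw [hr]
    simp only [b]
    rw [dif_pos i.2]
    have := hge i
    simp only [Fin.eta]; omega
  refine ⟨σ, mu, hmu, hai, ?_⟩
  rw [← schur_detH hmu]
  have h1 : detH R (fun k => (X k : SymFn R)) (fun i => rowF N mu i + dl i) =
      ((Equiv.Perm.sign σ : ℤ) : SymFn R) * detH R (fun k => (X k : SymFn R)) a := by
    unfold detH
    rw [← Matrix.det_permute]
    congr 1
    ext1 i j
    simp only [Matrix.submatrix_apply, Matrix.of_apply, id, hai]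
  rw [h1, smul_eq_C_mul, ← mul_assoc]
  rcases Int.units_eq_one_or (Equiv.Perm.sign σ) with h | h <;> simp [h]

theorem detH_not_inj {N : ℕ} (a : Fin N → ℕ) (ha : ¬ Function.Injective a) :
    detH R (fun k => (X k : SymFn R)) a = 0 := by
  unfold Function.Injective at ha
  push Not at ha
  obtain ⟨i, j, hij, hne⟩ := ha
  unfold detH
  apply Matrix.det_zero_of_row_eq hne
  ext1 k
  simp [hij]

theorem LN_span {N : ℕ} (g : MvPolynomial (Fin N) R) :
    LN R N g ∈ Submodule.span R (Set.range (schur (R := R))) := by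
  rw [g.as_sum, map_sum]
  refine Submodule.sum_mem _ fun α _ => ?_
  rw [LN_monomial]
  apply Submodule.smul_mem
  by_cases ha : Function.Injective (fun i => α i + dl i)
  · obtain ⟨σ, mu, _, _, h⟩ := detH_straight (R := R) _ ha
    rw [h]
    exact Submodule.smul_mem _ _ (Submodule.subset_span ⟨mu, rfl⟩)
  · rw [detH_not_inj _ ha]; exact Submodule.zero_mem _

theorem schur_span : Submodule.span R (Set.range (schur (R := R))) = ⊤ := by
  rw [eq_top_iff]
  intro f _
  rw [f.as_sum]
  refine Submodule.sum_mem _ fun s _ => ?_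
  have h : WH (monomial s (coeff s f) : SymFn R) (Finsupp.weight pw s) :=
    isWeightedHomogeneous_monomial _ _ _ rfl
  rw [← LN_piN le_rfl h]
  exact LN_span _

end PartE
end MacProof
end

noncomputable section
namespace MacProof

section PartF
variable {R : Type} [Field R] [CharZero R]

def chi {N : ℕ} (k : ℕ) (i : Fin N) : ℕ := if (i : ℕ) < k then 1 else 0

theorem pSum_fin {lam : Multiset ℕ+} {N : ℕ} (h : Multiset.card lam ≤ N) (k : ℕ) :
    pSum lam k = ∑ i : Fin N, chi k i * rowF N lam i := by
  rw [pSum_eq]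
  unfold chi rowF
  rw [← Finset.sum_range (n := N) (fun i => (if i < k then 1 else 0) * row lam i)]
  simp only [ite_mul, one_mul, zero_mul]
  rw [← Finset.sum_filter]
  symm
  apply Finset.sum_subset
  · intro i hi; simp at hi ⊢; omega
  · intro i hi hi'
    apply row_eq_zero
    simp at hi hi'; omega

theorem chi_anti {N : ℕ} (k : ℕ) : Antitone (chi (N := N) k) := by
  intro i j hij
  have : (i : ℕ) ≤ j := hij
  unfold chi
  split_ifs <;> omega

theorem chi_sum_le {N : ℕ} (k : ℕ) (b : Fin N → ℕ) (hb : Antitone b) (σ : Equiv.Perm (Fin N)) :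
    ∑ i, chi k i * b (σ i) ≤ ∑ i, chi k i * b i :=
  Monovary.sum_mul_comp_perm_le_sum_mul (Antitone.monovary (chi_anti k) hb)

theorem chi_succ {N : ℕ} (j : Fin N) (b : Fin N → ℕ) :
    ∑ i, chi (j + 1) i * b i = ∑ i, chi j i * b i + b j := by
  have h1 : ∀ i : Fin N, chi (j + 1) i = chi j i + if i = j then 1 else 0 := by
    intro i
    unfold chi
    by_cases h : i = j
    · subst h; simp
    · have : (i : ℕ) ≠ j := fun h' => h (Fin.ext h')
      rw [if_neg h]
      split_ifs <;> omega
  simp only [h1, add_mul, Finset.sum_add_distrib, ite_mul, one_mul, zero_mul]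
  rw [Finset.sum_ite_eq' Finset.univ j, if_pos (Finset.mem_univ _)]

theorem dl_anti {N : ℕ} : Antitone (dl (N := N)) := by
  intro i j hij
  have : (i : ℕ) ≤ j := hij
  unfold dl; omega

theorem rowF_anti {N : ℕ} (lam : Multiset ℕ+) : Antitone (rowF N lam) := by
  intro i j hij
  exact row_anti lam hij

def Lo (R : Type) [Field R] (lam : Multiset ℕ+) : Submodule R (SymFn R) :=
  Submodule.span R ((schur (R := R)) '' {mu | StrictDom mu lam})

theorem schur_mem_Lo {lam mu : Multiset ℕ+} (h : StrictDom mu lam) : schur mu ∈ Lo R lam :=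
  Submodule.subset_span ⟨mu, h, rfl⟩

theorem Lo_mono {lam mu : Multiset ℕ+} (h : StrictDom mu lam) : Lo R mu ≤ Lo R lam := by
  apply Submodule.span_mono
  rintro _ ⟨nu, hnu, rfl⟩
  exact ⟨nu, dom_trans hnu h, rfl⟩

theorem detH_perm {lam : Multiset ℕ+} {N : ℕ} (h : Multiset.card lam ≤ N) (ρ : Equiv.Perm (Fin N))
    (hne : (fun i => rowF N lam (ρ i)) ≠ rowF N lam) :
    detH R (fun k => (X k : SymFn R)) (fun i => rowF N lam (ρ i) + dl i) ∈ Lo R lam := by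
  by_cases ha : Function.Injective (fun i => rowF N lam (ρ i) + dl i)
  swap
  · rw [detH_not_inj _ ha]; exact Submodule.zero_mem _
  obtain ⟨σ, mu, hmu, hai, hdet⟩ := detH_straight (R := R) _ ha
  rw [hdet]
  apply Submodule.smul_mem
  apply schur_mem_Lo
  have e1 : ∀ k, pSum mu k + ∑ i : Fin N, chi k i * dl i =
      ∑ i, chi k i * rowF N lam ((σ.trans ρ) i) + ∑ i, chi k i * dl (σ i) := by
    intro k
    rw [pSum_fin hmu, ← Finset.sum_add_distrib, ← Finset.sum_add_distrib]
    refine Finset.sum_congr rfl fun i _ => ?_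
    rw [← mul_add, ← mul_add, ← hai i]; rfl
  have e2 := fun k => chi_sum_le k (rowF N lam) (rowF_anti lam) (σ.trans ρ)
  have e3 := fun k => chi_sum_le k (dl (N := N)) dl_anti σ
  simp only [← pSum_fin h] at e2
  refine ⟨?_, ?_, ?_⟩
  · intro heq
    subst heq
    apply hne
    have e4 : ∀ k, ∑ i, chi k i * dl (σ i) = ∑ i : Fin N, chi k i * dl i := by
      intro k
      have h1 := e1 k
      have h2 := e2 k
      have h3 := e3 k
      omega
    have hσ : ∀ i, σ i = i := by
      intro i
      have h1 := e4 (i + 1)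
      rw [chi_succ i (fun j => dl (σ j)), chi_succ i dl, e4 i] at h1
      have h2 := (σ i).2
      have h3 := i.2
      unfold dl at h1
      apply Fin.ext
      omega
    funext i
    have := hai i
    rw [hσ] at this
    omega
  · have hs : ∀ (b : Fin N → ℕ) (π : Equiv.Perm (Fin N)), ∑ i, chi N i * b (π i) = ∑ i, chi N i * b i := by
      intro b π
      have hc : ∀ i : Fin N, chi N i = 1 := fun i => by unfold chi; rw [if_pos i.2]
      simp only [hc, one_mul]
      exact Equiv.sum_comp π b
    have h1 := e1 N
    rw [hs dl σ, hs (rowF N lam) (σ.trans ρ), ← pSum_fin h, pSum_top h, pSum_top hmu] at h1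
    omega
  · intro k
    have h1 := e1 k
    have h2 := e2 k
    have h3 := e3 k
    omega

def eps (q t : R) (lam : Multiset ℕ+) : R :=
  1 + ∑ i ∈ Finset.range (Multiset.card lam), (t⁻¹ ^ i - t⁻¹ ^ (i + 1)) * (q ^ (row lam i) - 1)

theorem eps_eq (q t : R) {lam : Multiset ℕ+} {N : ℕ} (h : Multiset.card lam ≤ N) :
    eps q t lam = 1 + ∑ i ∈ Finset.range N, (t⁻¹ ^ i - t⁻¹ ^ (i + 1)) * (q ^ (row lam i) - 1) := by
  unfold eps
  congr 1
  apply Finset.sum_subset (Finset.range_mono h)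
  intro i _ hi
  rw [row_eq_zero (by simpa using hi)]; simp

theorem epsN_eq (q t : R) {lam : Multiset ℕ+} {N : ℕ} (h : Multiset.card lam ≤ N) :
    epsN q t (rowF N lam) = eps q t lam := by
  rw [eps_eq q t h, Finset.sum_range]; rfl

def rfs (N : ℕ) (lam : Multiset ℕ+) (ρ : Equiv.Perm (Fin N)) : Fin N →₀ ℕ :=
  Finsupp.equivFunOnFinite.symm (fun i => rowF N lam (ρ i))

theorem rfs_apply (N : ℕ) (lam : Multiset ℕ+) (ρ : Equiv.Perm (Fin N)) (i : Fin N) :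
    rfs N lam ρ i = rowF N lam (ρ i) := rfl

def monS (R : Type) [Field R] (N : ℕ) (lam : Multiset ℕ+) : MvPolynomial (Fin N) R :=
  ∑ ρ : Equiv.Perm (Fin N), monomial (rfs N lam ρ) 1

theorem monS_symm (N : ℕ) (lam : Multiset ℕ+) (τ : Equiv.Perm (Fin N)) :
    rename τ (monS R N lam) = monS R N lam := by
  unfold monS
  rw [map_sum, ← Equiv.sum_comp (Equiv.mulRight τ)]
  refine Finset.sum_congr rfl fun ρ _ => ?_
  rw [rename_monomial]
  have h1 : Finsupp.mapDomain τ (rfs N lam ((Equiv.mulRight τ) ρ)) = rfs N lam ρ := by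
    ext i
    rw [Finsupp.mapDomain_equiv_apply, rfs_apply, rfs_apply]
    simp
  rw [h1]

theorem piN_LN_monS (N : ℕ) (lam : Multiset ℕ+) : piN R N (LN R N (monS R N lam)) = monS R N lam := by
  have := piN_LN_mul 1 (monS R N lam) (monS_symm N lam)
  rwa [one_mul, LN_one, map_one, one_mul] at this

theorem monS_hom {N : ℕ} {lam : Multiset ℕ+} (h : Multiset.card lam ≤ N) :
    (monS R N lam).IsHomogeneous (wt lam) := by
  apply IsHomogeneous.sum
  intro ρ _
  apply isHomogeneous_monomial
  rw [Finsupp.degree_eq_sum]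
  simp only [rfs_apply]
  rw [Equiv.sum_comp ρ (rowF N lam), wt_eq h, Finset.sum_range]; rfl

theorem Eop_LN_monS {N : ℕ} {lam : Multiset ℕ+} (h : wt lam ≤ N) (q t : R) :
    Eop q t (LN R N (monS R N lam)) = ∑ ρ : Equiv.Perm (Fin N), epsN q t (fun i => rowF N lam (ρ i)) •
      detH R (fun k => (X k : SymFn R)) (fun i => rowF N lam (ρ i) + dl i) := by
  have hc := (card_le_wt lam).trans h
  rw [Eop_LN h q t (LN_hom (monS_hom hc)), piN_LN_monS]
  unfold monS
  rw [map_sum, map_sum]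
  refine Finset.sum_congr rfl fun ρ _ => ?_
  rw [Dop_monomial, map_smul, LN_monomial, one_smul]
  rfl

theorem LN_monS (N : ℕ) (lam : Multiset ℕ+) :
    LN R N (monS R N lam) = ∑ ρ : Equiv.Perm (Fin N),
      detH R (fun k => (X k : SymFn R)) (fun i => rowF N lam (ρ i) + dl i) := by
  unfold monS
  rw [map_sum]
  refine Finset.sum_congr rfl fun ρ _ => ?_
  rw [LN_monomial, one_smul]
  rfl

theorem E_Lo_aux (q t : R) (lam : Multiset ℕ+)
    (ih : ∀ mu, StrictDom mu lam → Eop q t (schur mu) - eps q t mu • schur mu ∈ Lo R mu)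
    (x : SymFn R) (hx : x ∈ Lo R lam) : Eop q t x ∈ Lo R lam := by
  induction hx using Submodule.span_induction with
  | mem x hx =>
    obtain ⟨mu, hmu, rfl⟩ := hx
    have h1 := Lo_mono hmu (ih mu hmu)
    have h2 := Submodule.add_mem _ h1 (Submodule.smul_mem _ (eps q t mu) (schur_mem_Lo (R := R) hmu))
    rwa [sub_add_cancel] at h2
  | zero => rw [map_zero]; exact Submodule.zero_mem _
  | add x y _ _ hx hy => rw [map_add]; exact Submodule.add_mem _ hx hy
  | smul r x _ hx => rw [map_smul]; exact Submodule.smul_mem _ _ hx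

theorem E_tri (q t : R) (lam : Multiset ℕ+) :
    Eop q t (schur lam) - eps q t lam • schur lam ∈ Lo R lam := by
  induction hn : dmeas lam using Nat.strong_induction_on generalizing lam with
  | _ n ih =>
    subst hn
    have hE := E_Lo_aux q t lam (fun mu hmu => ih _ (dmeas_lt hmu) mu rfl)
    classical
    set N := wt lam with hN
    have hc : Multiset.card lam ≤ N := card_le_wt lam
    let c : R := ∑ ρ : Equiv.Perm (Fin N), if (fun i => rowF N lam (ρ i)) = rowF N lam then 1 else 0
    have hc0 : c ≠ 0 := by
      simp only [c]
      rw [Finset.sum_boole, Nat.cast_ne_zero]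
      apply Finset.card_ne_zero_of_mem (a := (1 : Equiv.Perm (Fin N)))
      simp
    have h1 : LN R N (monS R N lam) - c • schur lam ∈ Lo R lam := by
      rw [LN_monS, Finset.sum_smul, ← Finset.sum_sub_distrib]
      refine Submodule.sum_mem _ fun ρ _ => ?_
      split_ifs with hρ
      · have : (fun i => rowF N lam (ρ i) + dl i) = (fun i => rowF N lam i + dl i) := by
          funext i; rw [congrFun hρ i]
        rw [this, schur_detH hc, one_smul, sub_self]; exact Submodule.zero_mem _
      · rw [zero_smul, sub_zero]; exact detH_perm hc ρ hρ
    have h2 : Eop q t (LN R N (monS R N lam)) - c • eps q t lam • schur lam ∈ Lo R lam := by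
      rw [Eop_LN_monS le_rfl, Finset.sum_smul, ← Finset.sum_sub_distrib]
      refine Submodule.sum_mem _ fun ρ _ => ?_
      split_ifs with hρ
      · have : (fun i => rowF N lam (ρ i) + dl i) = (fun i => rowF N lam i + dl i) := by
          funext i; rw [congrFun hρ i]
        rw [this, schur_detH hc, one_smul, hρ, epsN_eq q t hc, sub_self]; exact Submodule.zero_mem _
      · rw [zero_smul, sub_zero]; exact Submodule.smul_mem _ _ (detH_perm hc ρ hρ)
    have h3 := Submodule.sub_mem _ h2 (hE _ h1)
    have h4 : Eop q t (LN R N (monS R N lam)) - c • eps q t lam • schur lam -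
        Eop q t (LN R N (monS R N lam) - c • schur lam) =
        c • (Eop q t (schur lam) - eps q t lam • schur lam) := by
      rw [map_sub, map_smul, smul_sub]; abel
    rw [h4] at h3
    exact (Submodule.smul_mem_iff _ hc0).1 h3

theorem E_Lo (q t : R) (lam : Multiset ℕ+) (x : SymFn R) (hx : x ∈ Lo R lam) : Eop q t x ∈ Lo R lam :=
  E_Lo_aux q t lam (fun mu _ => E_tri q t mu) x hx

/-! eigenvectors -/

theorem Lo_le_P {q t : R} {P : Multiset ℕ+ → SymFn R} (hP : IsMacdonaldBasis q t P) (lam : Multiset ℕ+) :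
    Lo R lam ≤ Submodule.span R (P '' {mu | StrictDom mu lam}) := by
  induction hn : dmeas lam using Nat.strong_induction_on generalizing lam with
  | _ n ih =>
    subst hn
    apply Submodule.span_le.2
    rintro _ ⟨mu, hmu, rfl⟩
    have h1 := ih _ (dmeas_lt hmu) mu rfl (hP.1 mu)
    have h2 : Submodule.span R (P '' {nu | StrictDom nu mu}) ≤ Submodule.span R (P '' {nu | StrictDom nu lam}) := by
      apply Submodule.span_mono
      rintro _ ⟨nu, hnu, rfl⟩
      exact ⟨nu, dom_trans hnu hmu, rfl⟩
    have h3 : P mu ∈ Submodule.span R (P '' {nu | StrictDom nu lam}) := Submodule.subset_span ⟨mu, hmu, rfl⟩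
    have h4 := Submodule.sub_mem _ h3 (h2 h1)
    rwa [sub_sub_cancel] at h4

theorem P_span {q t : R} {P : Multiset ℕ+ → SymFn R} (hP : IsMacdonaldBasis q t P) :
    Submodule.span R (Set.range P) = ⊤ := by
  rw [eq_top_iff, ← schur_span]
  apply Submodule.span_le.2
  rintro _ ⟨mu, rfl⟩
  have h1 : P mu - schur mu ∈ Submodule.span R (Set.range P) :=
    Submodule.span_mono (Set.image_subset_range _ _) (Lo_le_P hP mu (hP.1 mu))
  have h3 : P mu ∈ Submodule.span R (Set.range P) := Submodule.subset_span ⟨mu, rfl⟩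
  have h4 := Submodule.sub_mem _ h3 h1
  rwa [sub_sub_cancel] at h4

theorem ip_span {q t : R} {P : Multiset ℕ+ → SymFn R} (hP : IsMacdonaldBasis q t P) (S : Set (Multiset ℕ+))
    (nu : Multiset ℕ+) (hnu : nu ∉ S) (x : SymFn R) (hx : x ∈ Submodule.span R (P '' S)) :
    ip q t (P nu) x = 0 := by
  induction hx using Submodule.span_induction with
  | mem x hx =>
    obtain ⟨mu, hmu, rfl⟩ := hx
    exact hP.2 nu mu (fun h => hnu (h ▸ hmu))
  | zero => rw [map_zero]
  | add x y _ _ hx hy => rw [map_add, hx, hy, add_zero]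
  | smul r x _ hx => rw [map_smul, hx, smul_zero]

theorem P_eigen {q t : R} (h0 : t ≠ 0) (hq : ∀ k : ℕ+, q ^ (k : ℕ) ≠ 1) (ht : ∀ k : ℕ+, t ^ (k : ℕ) ≠ 1)
    {P : Multiset ℕ+ → SymFn R} (hP : IsMacdonaldBasis q t P) (lam : Multiset ℕ+) :
    Eop q t (P lam) = eps q t lam • P lam := by
  have hx : ∀ lam, Eop q t (P lam) - eps q t lam • P lam ∈ Lo R lam := by
    intro lam
    have h1 := hP.1 lam
    have h2 := E_tri q t lam
    have h3 := E_Lo q t lam _ h1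
    have h4 := Submodule.sub_mem _ (Submodule.add_mem _ h3 h2) (Submodule.smul_mem _ (eps q t lam) h1)
    convert h4 using 1
    rw [map_sub, smul_sub]; abel
  rw [← sub_eq_zero]
  apply ip_nondeg q t hq ht
  set x := Eop q t (P lam) - eps q t lam • P lam with hxd
  have hself : lam ∉ {mu | StrictDom mu lam} := fun h => h.1 rfl
  have key : ∀ nu, ip q t (P nu) x = 0 := by
    intro nu
    by_cases hnu : StrictDom nu lam
    · rw [hxd, map_sub, map_smul, ← E_adj q t h0 ht, ip_apply q t (P nu), hP.2 nu lam hnu.1, smul_zero, sub_zero]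
      have h1 : Eop q t (P nu) ∈ Submodule.span R (P '' {mu | StrictDom mu lam}) := by
        have h2 := Lo_le_P hP lam (Lo_mono hnu (hx nu))
        have h3 : P nu ∈ Submodule.span R (P '' {mu | StrictDom mu lam}) := Submodule.subset_span ⟨nu, hnu, rfl⟩
        have h4 := Submodule.add_mem _ h2 (Submodule.smul_mem _ (eps q t nu) h3)
        rwa [sub_add_cancel] at h4
      rw [ip_symm]
      exact ip_span hP _ lam hself _ h1
    · exact ip_span hP _ nu hnu _ (Lo_le_P hP lam (hx lam))
  intro f
  have hf : f ∈ Submodule.span R (Set.range P) := by rw [P_span hP]; trivial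
  induction hf using Submodule.span_induction with
  | mem f hf => obtain ⟨nu, rfl⟩ := hf; exact key nu
  | zero => simp
  | add f g _ _ hf hg => rw [map_add, LinearMap.add_apply, hf, hg, add_zero]
  | smul r f _ hf => rw [map_smul, LinearMap.smul_apply, hf, smul_zero]

end PartF
end MacProof
end

noncomputable section
namespace MacProof

section PartG

theorem icl {R : Type} [Field R] {a b : R} (h : a ≠ 0) : a⁻¹ * (a * b) = b := inv_mul_cancel_left₀ h _

def RegAt (w : KK) (x : FF) : Prop := Polynomial.eval₂ (RingHom.id KK) w x.denom ≠ 0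

theorem reg_of_dvd {w : KK} {p r : Polynomial KK} (h : p ∣ r)
    (hr : Polynomial.eval₂ (RingHom.id KK) w r ≠ 0) : Polynomial.eval₂ (RingHom.id KK) w p ≠ 0 := by
  obtain ⟨s, rfl⟩ := h
  rw [Polynomial.eval₂_mul] at hr
  exact left_ne_zero_of_mul hr

def Oo (w : KK) : Subring FF where
  carrier := {x | RegAt w x}
  zero_mem' := by simp [RegAt]
  one_mem' := by simp [RegAt]
  add_mem' := by
    intro x y hx hy
    refine reg_of_dvd (RatFunc.denom_add_dvd x y) ?_
    rw [Polynomial.eval₂_mul]; exact mul_ne_zero hx hy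
  mul_mem' := by
    intro x y hx hy
    refine reg_of_dvd (RatFunc.denom_mul_dvd x y) ?_
    rw [Polynomial.eval₂_mul]; exact mul_ne_zero hx hy
  neg_mem' := by
    intro x hx
    have h1 : RegAt w (RatFunc.C (-1)) := by
      unfold RegAt; rw [RatFunc.denom_C]; simp
    have h2 : -x = RatFunc.C (-1) * x := by simp
    show RegAt w (-x)
    rw [h2]
    refine reg_of_dvd (RatFunc.denom_mul_dvd _ x) ?_
    rw [Polynomial.eval₂_mul]; exact mul_ne_zero h1 hx

def phi (w : KK) : Oo w →+* KK where
  toFun x := evalT w x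
  map_zero' := by simp [evalT]
  map_one' := by simp [evalT]
  map_add' x y := by exact RatFunc.eval_add (RingHom.id KK) w x.2 y.2
  map_mul' x y := by exact RatFunc.eval_mul (RingHom.id KK) w x.2 y.2

theorem C_mem (w a : KK) : (RatFunc.C a : FF) ∈ Oo w := by
  show RegAt w _
  simp [RegAt]

theorem C_eval (w a : KK) : evalT w (RatFunc.C a : FF) = a := by simp [evalT]

theorem t_mem (w : KK) : tF ∈ Oo w := by
  show RegAt w _
  simp [RegAt, tF]

theorem t_eval (w : KK) : evalT w tF = w := by simp [evalT, tF]

theorem inv_mem_O {w : KK} {x : FF} (h : evalT w x ≠ 0) : x⁻¹ ∈ Oo w := by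
  have hx : x ≠ 0 := by rintro rfl; simp [evalT] at h
  show RegAt w _
  refine reg_of_dvd (RatFunc.denom_inv_dvd hx) ?_
  intro h0
  apply h
  unfold evalT RatFunc.eval
  rw [h0, zero_div]

/-- the ideal of functions vanishing at the point -/
def mm (w : KK) (x : FF) : Prop := x ∈ Oo w ∧ evalT w x = 0

theorem mm_iff {w : KK} {x : FF} : mm w x ↔ ∃ y : Oo w, (y : FF) = x ∧ phi w y = 0 :=
  ⟨fun h => ⟨⟨x, h.1⟩, rfl, h.2⟩, by rintro ⟨y, rfl, h⟩; exact ⟨y.2, h⟩⟩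

theorem mm_zero (w : KK) : mm w 0 := mm_iff.2 ⟨0, rfl, map_zero _⟩

theorem mm_add {w : KK} {x y : FF} (hx : mm w x) (hy : mm w y) : mm w (x + y) := by
  rw [mm_iff] at *
  obtain ⟨x, rfl, hx⟩ := hx
  obtain ⟨y, rfl, hy⟩ := hy
  exact ⟨x + y, rfl, by rw [map_add, hx, hy, add_zero]⟩

theorem mm_mul {w : KK} {x y : FF} (hx : x ∈ Oo w) (hy : mm w y) : mm w (x * y) := by
  rw [mm_iff] at *
  obtain ⟨y, rfl, hy⟩ := hy
  exact ⟨⟨x, hx⟩ * y, rfl, by rw [map_mul, hy, mul_zero]⟩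

theorem mm_sum {w : KK} {ι : Type} (s : Finset ι) (f : ι → FF) (h : ∀ i ∈ s, mm w (f i)) :
    mm w (∑ i ∈ s, f i) := by
  classical
  induction s using Finset.induction_on with
  | empty => simpa using mm_zero w
  | insert a s ha ih =>
    rw [Finset.sum_insert ha]
    exact mm_add (h a (by simp)) (ih fun i hi => h i (by simp [hi]))

theorem mm_cancel {w : KK} {x y : FF} (hx : x ∈ Oo w) (hx0 : evalT w x ≠ 0) (h : mm w (x * y)) : mm w y := by
  have h1 : x ≠ 0 := by rintro rfl; simp [evalT] at hx0
  have := mm_mul (inv_mem_O hx0) h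
  have h2 : x⁻¹ * (x * y) = y := icl (R := FF) h1
  rwa [h2] at this

theorem natinv_mem (w : KK) (n : ℕ) : ((n : FF) + 1)⁻¹ ∈ Oo w := by
  apply inv_mem_O
  have : ((n : FF) + 1) = RatFunc.C ((n : KK) + 1) := by simp
  rw [this, C_eval]
  exact Nat.cast_add_one_ne_zero n

/-- integral lattice -/
def Mm (w : KK) : Subring (SymFn FF) := Subring.closure ((C '' (Oo w : Set FF)) ∪ Set.range X)

theorem C_Mm {w : KK} {x : FF} (h : x ∈ Oo w) : (C x : SymFn FF) ∈ Mm w :=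
  Subring.subset_closure (Or.inl ⟨x, h, rfl⟩)

theorem X_Mm (w : KK) (k : ℕ+) : (X k : SymFn FF) ∈ Mm w :=
  Subring.subset_closure (Or.inr ⟨k, rfl⟩)

theorem smul_Mm {w : KK} {x : FF} {f : SymFn FF} (h : x ∈ Oo w) (hf : f ∈ Mm w) : x • f ∈ Mm w := by
  rw [smul_eq_C_mul]; exact Subring.mul_mem _ (C_Mm h) hf

theorem hA_Mm (w : KK) (c : ℕ+ → SymFn FF) (hc : ∀ k, c k ∈ Mm w) (n : ℕ) : hA FF c n ∈ Mm w := by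
  induction n using Nat.strong_induction_on with
  | _ n ih =>
    cases n with
    | zero => rw [hA_zero]; exact Subring.one_mem _
    | succ n =>
      have h := hA_rec (R := FF) c n
      have h2 : hA FF c (n+1) = ((n : FF) + 1)⁻¹ • (((n : SymFn FF) + 1) * hA FF c (n+1)) := by
        have h3 : ((n : SymFn FF) + 1) = C ((n : FF) + 1) := by simp
        have h4 : ((n : FF) + 1)⁻¹ * (((n : FF) + 1) * 1) = 1 := icl (R := FF) (Nat.cast_add_one_ne_zero n)
        rw [mul_one] at h4
        rw [h3, smul_eq_C_mul, ← mul_assoc, ← C_mul, h4, C_1, one_mul]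
      rw [h2, h]
      refine smul_Mm (natinv_mem w n) (Subring.sum_mem _ fun i hi => ?_)
      exact Subring.mul_mem _ (hc _) (ih _ (by omega))

theorem schur_Mm (w : KK) (lam : Multiset ℕ+) : schur lam ∈ Mm w := by
  unfold schur
  rw [Matrix.det_apply]
  refine Subring.sum_mem _ fun σ _ => ?_
  have h : ∏ i, (Matrix.of fun i j : Fin (Multiset.card lam) =>
    hInt (R := FF) ((((descParts lam).getD i 0 : ℕ) : ℤ) + (j : ℤ) - (i : ℤ))) (σ i) i ∈ Mm w := by
    refine Subring.prod_mem _ fun i _ => ?_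
    rw [Matrix.of_apply]
    unfold hInt
    split_ifs
    · rw [← hX]; exact hA_Mm w _ (X_Mm w) _
    · exact Subring.zero_mem _
  rcases Int.units_eq_one_or (Equiv.Perm.sign σ) with h1 | h1
  · rw [h1, one_smul]; exact h
  · rw [h1, Units.neg_smul, one_smul]; exact Subring.neg_mem _ h

theorem tauC_Mm {w : KK} {q : FF} (hq : q ∈ Oo w) {f : SymFn FF} (hf : f ∈ Mm w) (m : ℕ) :
    tauC q m f ∈ Mm w := by
  rw [tauC_apply]
  unfold Mm at hf
  induction hf using Subring.closure_induction generalizing m with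
  | mem x hx =>
    rcases hx with ⟨a, ha, rfl⟩ | ⟨k, rfl⟩
    · have : tau q (C a) = Polynomial.C (C a) := by
        unfold tau
        rw [aeval_C]; rfl
      rw [this, Polynomial.coeff_C]
      split_ifs
      · exact C_Mm ha
      · exact Subring.zero_mem _
    · unfold tau
      rw [aeval_X, Polynomial.coeff_add, Polynomial.coeff_C_mul, Polynomial.coeff_C, Polynomial.coeff_X_pow]
      have h1 : (C (q ^ (k : ℕ) - 1) : SymFn FF) ∈ Mm w :=
        C_Mm (Subring.sub_mem _ (Subring.pow_mem _ hq _) (Subring.one_mem _))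
      refine Subring.add_mem _ ?_ (Subring.mul_mem _ h1 ?_)
      · split_ifs
        · exact X_Mm w k
        · exact Subring.zero_mem _
      · split_ifs
        · exact Subring.one_mem _
        · exact Subring.zero_mem _
  | zero => rw [map_zero]; exact Subring.zero_mem _
  | one => rw [map_one, Polynomial.coeff_one]; split_ifs; exacts [Subring.one_mem _, Subring.zero_mem _]
  | add x y _ _ hx hy => rw [map_add, Polynomial.coeff_add]; exact Subring.add_mem _ (hx m) (hy m)
  | neg x _ hx => rw [map_neg, Polynomial.coeff_neg]; exact Subring.neg_mem _ (hx m)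
  | mul x y _ _ hx hy =>
    rw [map_mul, Polynomial.coeff_mul]
    exact Subring.sum_mem _ fun i _ => Subring.mul_mem _ (hx _) (hy _)

theorem gT_Mm {w : KK} (ht : tF⁻¹ ∈ Oo w) (m : ℕ) : gT tF m ∈ Mm w := by
  apply hA_Mm
  intro k
  exact Subring.mul_mem _ (C_Mm (Subring.sub_mem _ (Subring.one_mem _) (Subring.pow_mem _ ht _))) (X_Mm w k)

theorem Eop_Mm {w : KK} {q : FF} (hq : q ∈ Oo w) (ht : tF⁻¹ ∈ Oo w) {f : SymFn FF} (hf : f ∈ Mm w) :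
    Eop q tF f ∈ Mm w := by
  rw [Eop_eq q tF f _ (Nat.lt_succ_self _)]
  exact Subring.sum_mem _ fun m _ => Subring.mul_mem _ (tauC_Mm hq hf m) (gT_Mm ht m)

theorem ev_Mm {w : KK} {c : ℕ+ → FF} (hc : ∀ k, c k ∈ Oo w) {f : SymFn FF} (hf : f ∈ Mm w) :
    aeval c f ∈ Oo w := by
  unfold Mm at hf
  induction hf using Subring.closure_induction with
  | mem x hx =>
    rcases hx with ⟨a, ha, rfl⟩ | ⟨k, rfl⟩
    · rw [aeval_C]; exact ha
    · rw [aeval_X]; exact hc k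
  | zero => rw [map_zero]; exact Subring.zero_mem _
  | one => rw [map_one]; exact Subring.one_mem _
  | add x y _ _ hx hy => rw [map_add]; exact Subring.add_mem _ hx hy
  | neg x _ hx => rw [map_neg]; exact Subring.neg_mem _ hx
  | mul x y _ _ hx hy => rw [map_mul]; exact Subring.mul_mem _ hx hy

theorem ev_gT {w : KK} {c : ℕ+ → FF} (ht : tF⁻¹ ∈ Oo w) (hc : ∀ k, c k ∈ Oo w)
    (h : ∀ k : ℕ+, mm w ((1 - tF⁻¹ ^ (k : ℕ)) * c k)) (m : ℕ) : mm w (aeval c (gT tF (m + 1))) := by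
  have h1 := congrArg (aeval c) (gT_rec tF m)
  rw [map_mul, map_sum] at h1
  have h3 : aeval c ((m : SymFn FF) + 1) = (m : FF) + 1 := by simp
  rw [h3] at h1
  have h0 : (m : FF) + 1 ≠ 0 := Nat.cast_add_one_ne_zero m
  have h2 : aeval c (gT tF (m+1)) = ((m : FF) + 1)⁻¹ * (((m : FF) + 1) * aeval c (gT tF (m+1))) := (icl (R := FF) h0).symm
  rw [h2, h1]
  refine mm_mul (natinv_mem w m) (mm_sum _ _ fun i _ => ?_)
  rw [map_mul, mul_comm, map_mul, aeval_C, aeval_X]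
  refine mm_mul (ev_Mm hc (gT_Mm ht _)) ?_
  exact h (Nat.succPNat i)

theorem ev_E {w : KK} {q : FF} (hq : q ∈ Oo w) {c : ℕ+ → FF} (ht : tF⁻¹ ∈ Oo w) (hc : ∀ k, c k ∈ Oo w)
    (h : ∀ k : ℕ+, mm w ((1 - tF⁻¹ ^ (k : ℕ)) * c k)) {f : SymFn FF} (hf : f ∈ Mm w) :
    mm w (aeval c (Eop q tF f) - aeval c f) := by
  rw [Eop_eq q tF f _ (Nat.lt_succ_self _), Finset.sum_range_succ', tauC_zero, gT_zero, mul_one, map_add,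
    add_sub_cancel_right, map_sum]
  refine mm_sum _ _ fun i _ => ?_
  rw [map_mul]
  exact mm_mul (ev_Mm hc (tauC_Mm hq hf _)) (ev_gT ht hc h i)

end PartG
end MacProof
end

noncomputable section
namespace MacProof

section PartH
variable {R : Type} [Field R] [CharZero R]

/-- span of Schur functions of length bigger than `l` -/
def Il (R : Type) [Field R] (l : ℕ) : Submodule R (SymFn R) :=
  Submodule.span R (schur '' {mu | l < Multiset.card mu})

theorem schur_Il {l : ℕ} {mu : Multiset ℕ+} (h : l < Multiset.card mu) : schur mu ∈ Il R l :=
  Submodule.subset_span ⟨mu, h, rfl⟩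

theorem Lo_le_Il {l : ℕ} {mu : Multiset ℕ+} (h : l < Multiset.card mu) : Lo R mu ≤ Il R l := by
  unfold Lo
  rw [Submodule.span_le]
  rintro _ ⟨nu, hnu, rfl⟩
  exact schur_Il (lt_of_lt_of_le h (dom_card hnu))

theorem E_Il (q t : R) {l : ℕ} {x : SymFn R} (hx : x ∈ Il R l) : Eop q t x ∈ Il R l := by
  unfold Il at hx
  induction hx using Submodule.span_induction with
  | mem x hx =>
    obtain ⟨mu, hmu, rfl⟩ := hx
    have h1 := Lo_le_Il hmu (E_tri q t mu)
    have h2 := Submodule.add_mem _ h1 (Submodule.smul_mem _ (eps q t mu) (schur_Il hmu))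
    rwa [sub_add_cancel] at h2
  | zero => rw [map_zero]; exact Submodule.zero_mem _
  | add x y _ _ hx hy => rw [map_add]; exact Submodule.add_mem _ hx hy
  | smul r x _ hx => rw [map_smul]; exact Submodule.smul_mem _ _ hx

theorem ev_schur_zero {l : ℕ} (y : Fin l → R) {mu : Multiset ℕ+} (h : l < Multiset.card mu) :
    aeval (ps y) (schur (R := R) mu) = 0 := by
  rw [← schur_detH (R := R) (le_refl (Multiset.card mu)), aeval_detH]
  unfold detH
  set N := Multiset.card mu with hN
  rw [← Matrix.exists_mulVec_eq_zero_iff]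
  let F : PowerSeries R := ∏ i, (1 - PowerSeries.C (y i) * PowerSeries.X)
  refine ⟨fun j => PowerSeries.coeff (N - 1 - j) F, ?_, ?_⟩
  · intro h0
    have h1 := congrFun h0 ⟨N - 1, by omega⟩
    simp only [Nat.sub_self, Pi.zero_apply] at h1
    simp [F, map_prod] at h1
  · ext i
    have hi : 0 < row mu i := row_pos i.2
    have h1 := coeff_Hs_mul (R := R) (ps y) F (N-1)
      (fun j hj => coeff_prod_lin _ _ _ (by simp; omega)) (rowF N mu i + dl i)
    rw [Hs_ps, PowerSeries.coeff_one, if_neg (by unfold rowF; omega), show N - 1 + 1 = N by omega,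
      Finset.sum_range, ← Equiv.sum_comp Fin.revPerm] at h1
    rw [Pi.zero_apply, h1]
    show ∑ j : Fin N, _ = _
    refine Finset.sum_congr rfl fun j _ => ?_
    have hj := j.2
    simp only [Matrix.of_apply, Fin.revPerm_apply, Fin.val_rev]
    congr 2
    · omega
    · congr 1; omega

theorem ev_Il {l : ℕ} (y : Fin l → R) {x : SymFn R} (hx : x ∈ Il R l) : aeval (ps y) x = 0 := by
  unfold Il at hx
  induction hx using Submodule.span_induction with
  | mem x hx =>
    obtain ⟨mu, hmu, rfl⟩ := hx
    exact ev_schur_zero y hmu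
  | zero => rw [map_zero]
  | add x y _ _ hx hy => rw [map_add, hx, hy, add_zero]
  | smul r x _ hx => rw [map_smul, hx, smul_zero]

/-- the product of `E - eps mu` over a finite set -/
def Pr (q t : R) (S : Finset (Multiset ℕ+)) : Module.End R (SymFn R) :=
  Polynomial.aeval (Eop q t : Module.End R (SymFn R)) (∏ mu ∈ S, (Polynomial.X - Polynomial.C (eps q t mu)))

theorem Pr_empty (q t : R) (x : SymFn R) : Pr q t ∅ x = x := by
  unfold Pr; simp

theorem Pr_insert (q t : R) (S : Finset (Multiset ℕ+)) [DecidableEq (Multiset ℕ+)] (mu : Multiset ℕ+) (h : mu ∉ S) (x : SymFn R) :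
    Pr q t (insert mu S) x = Eop q t (Pr q t S x) - eps q t mu • Pr q t S x := by
  unfold Pr
  rw [Finset.prod_insert h, map_mul, map_sub, Polynomial.aeval_X, Polynomial.aeval_C]
  rfl

theorem Pr_insert' (q t : R) (S : Finset (Multiset ℕ+)) [DecidableEq (Multiset ℕ+)] (mu : Multiset ℕ+) (h : mu ∉ S) (x : SymFn R) :
    Pr q t (insert mu S) x = Pr q t S (Eop q t x - eps q t mu • x) := by
  unfold Pr
  rw [Finset.prod_insert h, mul_comm, map_mul, map_sub, Polynomial.aeval_X, Polynomial.aeval_C]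
  rfl

theorem Pr_Il (q t : R) {l : ℕ} (S : Finset (Multiset ℕ+)) {x : SymFn R} (hx : x ∈ Il R l) :
    Pr q t S x ∈ Il R l := by
  classical
  induction S using Finset.induction_on with
  | empty => rwa [Pr_empty]
  | insert a S ha ih =>
    rw [Pr_insert q t S a ha]
    exact Submodule.sub_mem _ (E_Il q t ih) (Submodule.smul_mem _ _ ih)

theorem Pr_eigen (q t : R) (S : Finset (Multiset ℕ+)) {x : SymFn R} {e : R} (hx : Eop q t x = e • x) :
    Pr q t S x = (∏ mu ∈ S, (e - eps q t mu)) • x := by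
  classical
  induction S using Finset.induction_on with
  | empty => rw [Pr_empty]; simp
  | insert a S ha ih =>
    rw [Pr_insert q t S a ha, ih, map_smul, hx, Finset.prod_insert ha, mul_smul, sub_smul, smul_comm _ e]

theorem Pr_schur (q t : R) (l : ℕ) (n : ℕ) : ∀ (mu : Multiset ℕ+) (S : Finset (Multiset ℕ+)), dmeas mu < n →
    (∀ nu, (nu = mu ∨ StrictDom nu mu) → Multiset.card nu ≤ l → nu ∈ S) → Pr q t S (schur mu) ∈ Il R l := by
  classical
  induction n with
  | zero => intro mu S h; omega
  | succ n ih =>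
    intro mu S hn hS
    by_cases hc : l < Multiset.card mu
    · exact Pr_Il q t S (schur_Il hc)
    have hmu := hS mu (Or.inl rfl) (by omega)
    rw [← Finset.insert_erase hmu, Pr_insert' q t _ _ (Finset.notMem_erase mu S)]
    have h1 := E_tri q t mu
    generalize Eop q t (schur mu) - eps q t mu • schur mu = x at h1
    unfold Lo at h1
    induction h1 using Submodule.span_induction with
    | mem x hx =>
      obtain ⟨nu, hnu, rfl⟩ := hx
      have h2 := dmeas_lt hnu
      apply ih nu _ (by omega)
      intro ka hka hkc
      have hk : StrictDom ka mu := by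
        rcases hka with rfl | h
        · exact hnu
        · exact dom_trans h hnu
      exact Finset.mem_erase.2 ⟨hk.1, hS ka (Or.inr hk) hkc⟩
    | zero => rw [map_zero]; exact Submodule.zero_mem _
    | add x y _ _ hx hy => rw [map_add]; exact Submodule.add_mem _ hx hy
    | smul r x _ hx => rw [map_smul]; exact Submodule.smul_mem _ _ hx

theorem Pr_Lo (q t : R) (l : ℕ) (lam : Multiset ℕ+) (S : Finset (Multiset ℕ+))
    (hS : ∀ nu, StrictDom nu lam → Multiset.card nu ≤ l → nu ∈ S) {x : SymFn R} (hx : x ∈ Lo R lam) :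
    Pr q t S x ∈ Il R l := by
  unfold Lo at hx
  induction hx using Submodule.span_induction with
  | mem x hx =>
    obtain ⟨nu, hnu, rfl⟩ := hx
    apply Pr_schur q t l _ nu S (Nat.lt_succ_self _)
    intro ka hka
    apply hS
    rcases hka with rfl | h
    · exact hnu
    · exact dom_trans h hnu
  | zero => rw [map_zero]; exact Submodule.zero_mem _
  | add x y _ _ hx hy => rw [map_add]; exact Submodule.add_mem _ hx hy
  | smul r x _ hx => rw [map_smul]; exact Submodule.smul_mem _ _ hx

theorem fin_below (lam : Multiset ℕ+) (l : ℕ) : {mu | StrictDom mu lam ∧ Multiset.card mu ≤ l}.Finite := by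
  refine Set.Finite.of_finite_image (f := fun mu => rowF l mu) ?_ ?_
  · refine Set.Finite.subset (Set.finite_Iic (fun _ : Fin l => wt lam)) ?_
    rintro _ ⟨mu, ⟨h1, h2⟩, rfl⟩ i
    show row mu i ≤ wt lam
    rw [← h1.2.1, wt_eq h2]
    exact Finset.single_le_sum (f := fun i => row mu i) (fun _ _ => Nat.zero_le _) (Finset.mem_range.2 i.2)
  · intro mu hmu nu hnu h
    apply row_inj
    intro i
    by_cases hi : i < l
    · exact congrFun h ⟨i, hi⟩
    · rw [row_eq_zero (hmu.2.trans (by omega)), row_eq_zero (hnu.2.trans (by omega))]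

theorem first_diff {lam mu : Multiset ℕ+} {l : ℕ} (h : StrictDom mu lam) (hl : Multiset.card lam ≤ l)
    (hm : Multiset.card mu ≤ l) :
    ∃ k < l, (∀ i < k, row mu i = row lam i) ∧ row mu k < row lam k := by
  have hex : ∃ k, row mu k ≠ row lam k := by
    by_contra hc
    push Not at hc
    exact h.1 (row_inj hc)
  classical
  have h1 := Nat.find_spec hex
  have h2 : ∀ i < Nat.find hex, row mu i = row lam i := fun i hi => not_not.1 (Nat.find_min hex hi)
  set k := Nat.find hex
  refine ⟨k, ?_, h2, ?_⟩
  · by_contra hk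
    exact h1 (by rw [row_eq_zero (hm.trans (by omega)), row_eq_zero (hl.trans (by omega))])
  · have h3 := h.2.2 (k+1)
    have hs : ∑ i ∈ Finset.range k, row mu i = ∑ i ∈ Finset.range k, row lam i :=
      Finset.sum_congr rfl (fun i hi => h2 i (Finset.mem_range.1 hi))
    rw [pSum_eq, pSum_eq, Finset.sum_range_succ, Finset.sum_range_succ, hs] at h3
    have h4 : row mu k ≠ row lam k := h1
    omega

/-- nonvanishing -/
theorem nonvan {l : ℕ} {z : ℂ} (hz : IsPrimitiveRoot z l) (a b : ℕ → ℕ) (ha : Antitone a) (hb : Antitone b)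
    (hconst : ∃ i < l, a i ≠ a 0) {k : ℕ} (hk : k < l) (h1 : ∀ i < k, b i = a i) (h2 : b k < a k) :
    ∑ i ∈ Finset.range l, (RatFunc.C z⁻¹ : KK) ^ i * (qK ^ (a i) - qK ^ (b i)) ≠ 0 := by
  classical
  have hl : 2 ≤ l := by
    obtain ⟨i, hi, hi0⟩ := hconst
    rcases Nat.eq_zero_or_pos i with rfl | h
    · exact absurd rfl hi0
    · omega
  have hz' : IsPrimitiveRoot z⁻¹ l := hz.inv
  let p : Polynomial ℂ := ∑ i ∈ Finset.range l, Polynomial.C (z⁻¹ ^ i) * (Polynomial.X ^ (a i) - Polynomial.X ^ (b i))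
  have hp : ∑ i ∈ Finset.range l, (RatFunc.C z⁻¹ : KK) ^ i * (qK ^ (a i) - qK ^ (b i)) =
      algebraMap (Polynomial ℂ) (RatFunc ℂ) p := by
    simp only [p, map_sum, map_mul, map_sub, map_pow, RatFunc.algebraMap_C, RatFunc.algebraMap_X, qK]
  rw [hp]
  intro h0
  have hp0 : p = 0 := (map_eq_zero_iff _ (IsFractionRing.injective (Polynomial ℂ) (RatFunc ℂ))).1 h0
  have hc : p.coeff (a k) = 0 := by rw [hp0]; simp
  have hex : ∃ e, l ≤ e ∨ a e < a k := ⟨l, Or.inl le_rfl⟩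
  have he1 := Nat.find_spec hex
  have he2 : ∀ i < Nat.find hex, i < l ∧ a k ≤ a i := fun i hi => by
    have := Nat.find_min hex hi
    push Not at this
    exact this
  have hel : Nat.find hex ≤ l := Nat.find_min' hex (Or.inl le_rfl)
  set e := Nat.find hex with hedef
  have hke : k < e := by
    by_contra hke
    rcases he1 with h | h
    · omega
    · have := ha (show e ≤ k by omega); omega
  have hcoef : ∀ i ∈ Finset.range l, (Polynomial.C (z⁻¹ ^ i) * (Polynomial.X ^ (a i) - Polynomial.X ^ (b i))).coeff (a k)
      = if k ≤ i ∧ i < e then z⁻¹ ^ i else 0 := by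
    intro i hi
    have hi := Finset.mem_range.1 hi
    rw [Polynomial.coeff_C_mul, Polynomial.coeff_sub, Polynomial.coeff_X_pow, Polynomial.coeff_X_pow]
    by_cases hik : k ≤ i
    · have hbi : a k ≠ b i := by have := hb hik; omega
      rw [if_neg hbi, sub_zero]
      by_cases hie : i < e
      · have := (he2 i hie).2
        have := ha hik
        rw [if_pos (by omega), if_pos ⟨hik, hie⟩, mul_one]
      · have : a i < a k := by
          rcases he1 with h | h
          · omega
          · exact lt_of_le_of_lt (ha (by omega)) h
        rw [if_neg (by omega), if_neg (by tauto), mul_zero]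
    · rw [h1 i (by omega), sub_self, mul_zero, if_neg (by tauto)]
  have hlt : e - k < l := by
    by_contra hcon
    have hk0 : k = 0 := by omega
    have he0 : e = l := by omega
    obtain ⟨i, hi, hi0⟩ := hconst
    have h3 := (he2 i (by omega)).2
    have h4 := ha (Nat.zero_le i)
    rw [hk0] at h3
    omega
  have hs : p.coeff (a k) = z⁻¹ ^ k * ∑ i ∈ Finset.range (e - k), z⁻¹ ^ i := by
    simp only [p, Polynomial.finsetSum_coeff]
    rw [Finset.sum_congr rfl hcoef, ← Finset.sum_filter, Finset.mul_sum]
    have : (Finset.range l).filter (fun i => k ≤ i ∧ i < e) = Finset.Ico k e := by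
      ext i; simp; omega
    rw [this, Finset.sum_Ico_eq_sum_range]
    simp [pow_add]
  rw [hs] at hc
  have hz0 : z⁻¹ ≠ 0 := hz'.ne_zero (by omega)
  have h5 := (mul_eq_zero.1 hc).resolve_left (pow_ne_zero _ hz0)
  have h6 := mul_neg_geom_sum z⁻¹ (e - k)
  rw [h5, mul_zero] at h6
  exact hz'.pow_ne_one_of_pos_of_lt (by omega) hlt (sub_eq_zero.1 h6.symm).symm

theorem nonconst {lam : Multiset ℕ+} {l : ℕ} (hl : Multiset.card lam ≤ l) (h0 : lam ≠ 0)
    (hr : ¬ ∃ r : ℕ+, lam = Multiset.replicate l r) : ∃ i < l, row lam i ≠ row lam 0 := by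
  by_contra hc
  push Not at hc
  have hpos : 0 < Multiset.card lam := Multiset.card_pos.2 h0
  have hp0 := row_pos hpos
  apply hr
  have hcard : Multiset.card lam = l := by
    by_contra hne
    have h1 := hc (Multiset.card lam) (by omega)
    rw [row_eq_zero le_rfl] at h1; omega
  refine ⟨⟨row lam 0, hp0⟩, Multiset.eq_replicate.2 ⟨hcard, ?_⟩⟩
  intro b hb
  have h1 : (b : ℕ) ∈ descParts lam := by
    rw [← Multiset.mem_coe, descParts_coe]
    exact Multiset.mem_map_of_mem _ hb
  obtain ⟨i, hi, hib⟩ := List.getElem_of_mem h1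
  have h2 := hc i (by rw [descParts_length] at hi; omega)
  apply PNat.eq
  show (b : ℕ) = row lam 0
  rw [← h2, ← hib]
  unfold row
  simp [hi]

end PartH
end MacProof
end

noncomputable section
namespace MacProof

section PartI

theorem dom_field {R : Type} [Field R] : IsDomain R := inferInstance

theorem domFF : IsDomain FF := dom_field (R := FF)

theorem iss {R : Type} [Field R] {c : R} (h : c ≠ 0) (x : SymFn R) : c⁻¹ • c • x = x := inv_smul_smul₀ h x

theorem X_pow_ne_one {K : Type} [Field K] (k : ℕ+) : (RatFunc.X : RatFunc K) ^ (k : ℕ) ≠ 1 := by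
  intro h
  have h1 : algebraMap (Polynomial K) (RatFunc K) (Polynomial.X ^ (k : ℕ)) = algebraMap (Polynomial K) (RatFunc K) 1 := by
    rw [map_pow, RatFunc.algebraMap_X, map_one, h]
  have h2 := IsFractionRing.injective (Polynomial K) (RatFunc K) h1
  have h3 := congrArg Polynomial.natDegree h2
  rw [Polynomial.natDegree_X_pow, Polynomial.natDegree_one] at h3
  exact k.ne_zero h3

theorem t_pow (k : ℕ+) : tF ^ (k : ℕ) ≠ 1 := X_pow_ne_one k

theorem q_pow (k : ℕ+) : qF ^ (k : ℕ) ≠ 1 := by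
  intro h
  unfold qF at h
  rw [← map_pow, ← map_one (RatFunc.C (K := KK))] at h
  exact X_pow_ne_one k (RatFunc.C_injective h)

theorem t_ne : tF ≠ 0 := RatFunc.X_ne_zero

def yy (l : ℕ) (z : ℂ) (i : Fin l) : FF := (RatFunc.C (RatFunc.C z : KK) : FF) ^ (i : ℕ)

theorem macEval_eq (l : ℕ) (z : ℂ) (f : SymFn FF) :
    macEvalRoots l z f = evalT (RatFunc.C z) (aeval (ps (yy l z)) f) := by
  unfold macEvalRoots
  have : (fun k : ℕ+ => ∑ i ∈ Finset.range l, (RatFunc.C (RatFunc.C z) : FF) ^ (i * (k : ℕ))) = ps (yy l z) := by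
    ext k
    unfold ps yy
    rw [Finset.sum_range]
    simp only [pow_mul]
  rw [this]

theorem tinv_mem {z : ℂ} (hz : z ≠ 0) : tF⁻¹ ∈ Oo (RatFunc.C z) := by
  apply inv_mem_O
  rw [t_eval]
  simpa using hz

theorem tinv_eval {z : ℂ} (hz : z ≠ 0) : phi (RatFunc.C z) ⟨tF⁻¹, tinv_mem hz⟩ = RatFunc.C z⁻¹ := by
  have h1 : (⟨tF, t_mem _⟩ : Oo (RatFunc.C z)) * ⟨tF⁻¹, tinv_mem hz⟩ = 1 := by
    apply Subtype.ext
    exact mul_inv_cancel₀ (G₀ := FF) t_ne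
  have h2 := congrArg (phi (RatFunc.C z)) h1
  rw [map_mul, map_one] at h2
  have h3 : phi (RatFunc.C z) ⟨tF, t_mem _⟩ = RatFunc.C z := t_eval _
  rw [h3] at h2
  have h4 : (RatFunc.C z⁻¹ : KK) * RatFunc.C z = 1 := by rw [← map_mul, inv_mul_cancel₀ hz, map_one]
  calc _ = ((RatFunc.C z⁻¹ : KK) * RatFunc.C z) * phi (RatFunc.C z) ⟨tF⁻¹, tinv_mem hz⟩ := by rw [h4, one_mul]
    _ = _ := by rw [mul_assoc, h2, mul_one]

def epsO {z : ℂ} (hz : z ≠ 0) (l : ℕ) (lam : Multiset ℕ+) : Oo (RatFunc.C z) :=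
  1 + ∑ i ∈ Finset.range l, ((⟨tF⁻¹, tinv_mem hz⟩ : Oo (RatFunc.C z)) ^ i - ⟨tF⁻¹, tinv_mem hz⟩ ^ (i + 1)) *
    (⟨qF, C_mem _ _⟩ ^ (row lam i) - 1)

theorem epsO_coe {z : ℂ} (hz : z ≠ 0) {l : ℕ} {lam : Multiset ℕ+} (h : Multiset.card lam ≤ l) :
    (epsO hz l lam : FF) = eps qF tF lam := by
  rw [eps_eq qF tF h]
  unfold epsO
  push_cast
  rfl

theorem eps_mem {z : ℂ} (hz : z ≠ 0) (lam : Multiset ℕ+) : eps qF tF lam ∈ Oo (RatFunc.C z) := by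
  rw [← epsO_coe hz le_rfl]; exact Subtype.property _

theorem eps_diff {z : ℂ} (hz : z ≠ 0) {l : ℕ} {lam mu : Multiset ℕ+} (h : Multiset.card lam ≤ l)
    (h' : Multiset.card mu ≤ l) : evalT (RatFunc.C z) (eps qF tF lam - eps qF tF mu) =
      (1 - RatFunc.C z⁻¹) * ∑ i ∈ Finset.range l, (RatFunc.C z⁻¹ : KK) ^ i * (qK ^ (row lam i) - qK ^ (row mu i)) := by
  rw [← epsO_coe hz h, ← epsO_coe hz h']
  show phi (RatFunc.C z) (epsO hz l lam - epsO hz l mu) = _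
  have hq : phi (RatFunc.C z) ⟨qF, C_mem _ _⟩ = qK := C_eval _ _
  unfold epsO
  simp only [map_sub, map_add, map_one, map_sum, map_mul, map_pow, tinv_eval hz, hq]
  rw [add_sub_add_left_eq_sub, ← Finset.sum_sub_distrib, Finset.mul_sum]
  refine Finset.sum_congr rfl fun i _ => ?_
  ring

theorem eps_ne {l : ℕ} {z : ℂ} (hz : IsPrimitiveRoot z l) {lam mu : Multiset ℕ+} (h : Multiset.card lam ≤ l)
    (h' : Multiset.card mu ≤ l) (hconst : ∃ i < l, row lam i ≠ row lam 0) {k : ℕ} (hk : k < l)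
    (h1 : ∀ i < k, row mu i = row lam i) (h2 : row mu k < row lam k) :
    evalT (RatFunc.C z) (eps qF tF lam - eps qF tF mu) ≠ 0 := by
  have hz0 : z ≠ 0 := hz.ne_zero (by omega)
  have hl : 1 < l := by
    obtain ⟨i, hi, hi0⟩ := hconst
    rcases Nat.eq_zero_or_pos i with rfl | h
    · exact absurd rfl hi0
    · omega
  rw [eps_diff hz0 h h']
  refine mul_ne_zero ?_ (nonvan hz _ _ (row_anti _) (row_anti _) hconst hk h1 h2)
  rw [← map_one (RatFunc.C (K := ℂ)), ← map_sub]
  have : (1 : ℂ) - z⁻¹ ≠ 0 := by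
    rw [sub_ne_zero]
    exact fun hh => (hz.inv.ne_one hl) hh.symm
  exact fun hh => this (RatFunc.C_injective (hh.trans (map_zero _).symm))

theorem ps_mem (l : ℕ) (z : ℂ) (k : ℕ+) : ps (yy l z) k ∈ Oo (RatFunc.C z) :=
  Subring.sum_mem _ fun _ _ => Subring.pow_mem _ (Subring.pow_mem _ (C_mem _ _) _) _

theorem zz_prim {l : ℕ} {z : ℂ} (hz : IsPrimitiveRoot z l) :
    IsPrimitiveRoot (RatFunc.C (RatFunc.C z : KK) : FF) l :=
  (hz.map_of_injective (f := RatFunc.C) RatFunc.C_injective).map_of_injective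
    (f := RatFunc.C (K := KK)) RatFunc.C_injective

theorem ps_mm {l : ℕ} (hl : 0 < l) {z : ℂ} (hz : IsPrimitiveRoot z l) (k : ℕ+) :
    mm (RatFunc.C z) ((1 - tF⁻¹ ^ (k : ℕ)) * ps (yy l z) k) := by
  have hz0 : z ≠ 0 := hz.ne_zero (by omega)
  by_cases hk : l ∣ k
  · rw [mul_comm]
    refine mm_mul (ps_mem l z k) (mm_iff.2 ⟨1 - ⟨tF⁻¹, tinv_mem hz0⟩ ^ (k : ℕ), rfl, ?_⟩)
    rw [map_sub, map_one, map_pow, tinv_eval hz0, ← map_pow, (hz.inv.pow_eq_one_iff_dvd _).2 hk, map_one, sub_self]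
  · have h0 : ps (yy l z) k = 0 := by
      have hz2 := zz_prim hz
      set x : FF := RatFunc.C (RatFunc.C z : KK) with hx
      have h1 : ps (yy l z) k = ∑ i ∈ Finset.range l, (x ^ (k : ℕ)) ^ i := by
        unfold ps yy
        rw [Finset.sum_range]
        refine Finset.sum_congr rfl fun i _ => ?_
        rw [← pow_mul, ← pow_mul, mul_comm]
      have h2 : x ^ (k : ℕ) ≠ 1 := fun h => hk ((hz2.pow_eq_one_iff_dvd _).1 h)
      have h3 := mul_neg_geom_sum (x ^ (k : ℕ)) l
      rw [← pow_mul, mul_comm (k : ℕ), pow_mul x l, hz2.pow_eq_one, one_pow, sub_self] at h3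
      rw [h1]
      have := domFF
      exact (mul_eq_zero.1 h3).resolve_left (sub_ne_zero.2 (Ne.symm h2))
    rw [h0, mul_zero]; exact mm_zero _

theorem Pr_Mm {z : ℂ} (hz : z ≠ 0) (S : Finset (Multiset ℕ+)) {f : SymFn FF} (hf : f ∈ Mm (RatFunc.C z)) :
    Pr qF tF S f ∈ Mm (RatFunc.C z) := by
  classical
  induction S using Finset.induction_on with
  | empty => rwa [Pr_empty]
  | insert a S ha ih =>
    rw [Pr_insert qF tF S a ha]
    exact Subring.sub_mem _ (Eop_Mm (C_mem _ _) (tinv_mem hz) ih) (smul_Mm (eps_mem hz a) ih)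

theorem case_generic {l : ℕ} (hl : 0 < l) {z : ℂ} (hz : IsPrimitiveRoot z l)
    {P : Multiset ℕ+ → SymFn FF} (hP : IsMacdonaldBasis qF tF P)
    {lam : Multiset ℕ+} (hlen : Multiset.card lam ≤ l) (h0 : lam ≠ 0)
    (hr : ¬ ∃ r : ℕ+, lam = Multiset.replicate l r) : macEvalRoots l z (P lam) = 0 := by
  rw [macEval_eq]
  have hz0 : z ≠ 0 := hz.ne_zero (by omega)
  have hconst := nonconst hlen h0 hr
  let S : Finset (Multiset ℕ+) := (fin_below lam l).toFinset
  have hS : ∀ nu, StrictDom nu lam → Multiset.card nu ≤ l → nu ∈ S := fun nu h1 h2 => by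
    simp only [S, Set.Finite.mem_toFinset]; exact ⟨h1, h2⟩
  have hS2 : ∀ nu ∈ S, StrictDom nu lam ∧ Multiset.card nu ≤ l := fun nu h => by
    simp only [S, Set.Finite.mem_toFinset] at h; exact h
  let c : FF := ∏ mu ∈ S, (eps qF tF lam - eps qF tF mu)
  have hu : ∀ mu ∈ S, evalT (RatFunc.C z) (eps qF tF lam - eps qF tF mu) ≠ 0 := fun mu hmu => by
    obtain ⟨h1, h2⟩ := hS2 mu hmu
    obtain ⟨k, hk, h3, h4⟩ := first_diff h1 hlen h2
    exact eps_ne hz hlen h2 hconst hk h3 h4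
  have hc0 : c ≠ 0 := by
    have := domFF
    rw [Finset.prod_ne_zero_iff]
    intro mu hmu h
    apply hu mu hmu
    rw [h]; simp [evalT]
  have hcinv : c⁻¹ ∈ Oo (RatFunc.C z) := by
    apply inv_mem_O
    let d : Oo (RatFunc.C z) := ∏ mu ∈ S,
      ((⟨_, eps_mem hz0 lam⟩ : Oo (RatFunc.C z)) - ⟨_, eps_mem hz0 mu⟩)
    have hd : (d : FF) = c := by simp only [d, c]; push_cast; rfl
    rw [← hd]
    show phi _ d ≠ 0
    rw [map_prod, Finset.prod_ne_zero_iff]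
    exact hu
  let F : SymFn FF := c⁻¹ • Pr qF tF S (schur lam)
  have hF : F ∈ Mm (RatFunc.C z) := smul_Mm hcinv (Pr_Mm hz0 S (schur_Mm _ lam))
  have hPE := P_eigen t_ne q_pow t_pow hP lam
  have hPF : P lam - F ∈ Il FF l := by
    have h1 := Pr_Lo qF tF l lam S hS (hP.1 lam)
    rw [map_sub, Pr_eigen qF tF S hPE] at h1
    have h2 := Submodule.smul_mem _ c⁻¹ h1
    have h3 : c⁻¹ • (c • P lam - Pr qF tF S (schur lam)) = P lam - F := by
      rw [smul_sub]
      have h4 : c⁻¹ • c • P lam = P lam := iss (R := FF) hc0 (P lam)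
      rw [h4]
    rw [← h3]
    exact h2
  have hev := ev_Il (yy l z) hPF
  have hev2 := ev_Il (yy l z) (E_Il qF tF hPF)
  rw [map_sub, sub_eq_zero] at hev
  rw [map_sub, hPE, map_sub, map_smul, smul_eq_mul, sub_eq_zero, hev] at hev2
  have h5 := ev_E (C_mem _ _ : qF ∈ Oo (RatFunc.C z)) (tinv_mem hz0) (ps_mem l z) (ps_mm hl hz) hF
  have h6 : mm (RatFunc.C z) ((eps qF tF lam - 1) * aeval (ps (yy l z)) F) := by
    rw [sub_mul, one_mul, hev2]; exact h5
  have h7 : evalT (RatFunc.C z) (eps qF tF lam - 1) ≠ 0 := by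
    have h8 : eps qF tF (0 : Multiset ℕ+) = 1 := by simp [eps]
    rw [← h8]
    have hp := row_pos (Multiset.card_pos.2 h0)
    refine eps_ne hz hlen (by simp) hconst (k := 0) hl (by simp) ?_
    rw [row_eq_zero (by simp)]; exact hp
  have h9 := mm_cancel (Subring.sub_mem _ (eps_mem hz0 lam) (Subring.one_mem _)) h7 h6
  rw [hev]
  exact h9.2

theorem case_zero (l : ℕ) (z : ℂ) {P : Multiset ℕ+ → SymFn FF} (hP : IsMacdonaldBasis qF tF P) :
    macEvalRoots l z (P 0) = 1 := by
  have h1 := hP.1 0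
  have h2 : {mu | StrictDom mu (0 : Multiset ℕ+)} = ∅ := by
    ext mu
    simp only [Set.mem_setOf_eq, Set.mem_empty_iff_false, iff_false]
    intro h
    apply h.1
    have h3 := card_le_wt mu
    rw [h.2.1] at h3
    simpa [wt] using h3
  rw [h2] at h1
  simp only [Set.image_empty, Submodule.span_empty, Submodule.mem_bot] at h1
  have h3 : schur (R := FF) 0 = 1 := by
    unfold schur
    exact Matrix.det_fin_zero
  rw [h3, sub_eq_zero] at h1
  rw [macEval_eq, h1, map_one]
  simp [evalT]

theorem row_repl {l i : ℕ} (r : ℕ+) (hi : i < l) : row (Multiset.replicate l r) i = r := by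
  have h1 : i < (descParts (Multiset.replicate l r)).length := by rw [descParts_length]; simpa using hi
  have h2 : row (Multiset.replicate l r) i = (descParts (Multiset.replicate l r))[i] := by
    unfold row; simp [h1]
  rw [h2]
  have h3 := List.getElem_mem h1
  rw [← Multiset.mem_coe, descParts_coe] at h3
  obtain ⟨b, hb, hb2⟩ := Multiset.mem_map.1 h3
  rw [← hb2, Multiset.eq_of_mem_replicate hb]

theorem prod_zeta {l : ℕ} (hl : 0 < l) {z : ℂ} (hz : IsPrimitiveRoot z l) :
    ∏ i ∈ Finset.range l, z ^ i = (-1) ^ (l - 1) := by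
  rw [Finset.prod_pow_eq_pow_sum, Finset.sum_range_id]
  rcases Nat.even_or_odd l with ⟨m, hm⟩ | ⟨m, hm⟩
  · have h1 : z ^ m = -1 := by
      have h2 : z ^ m * z ^ m = 1 := by rw [← pow_add, ← hm, hz.pow_eq_one]
      have h3 : z ^ m ≠ 1 := hz.pow_ne_one_of_pos_of_lt (by omega) (by omega)
      exact (mul_self_eq_one_iff.1 h2).resolve_left h3
    have h4 : l * (l - 1) / 2 = m * (l - 1) := by
      rw [hm, ← two_mul, mul_assoc, Nat.mul_div_cancel_left _ (by norm_num)]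
    rw [h4, pow_mul, h1]
  · have h4 : l * (l - 1) / 2 = l * m := by
      rw [hm, Nat.add_sub_cancel, show (2*m+1) * (2*m) = 2 * ((2*m+1)*m) by ring, Nat.mul_div_cancel_left _ (by norm_num)]
    rw [h4, pow_mul, hz.pow_eq_one, one_pow, hm, Nat.add_sub_cancel, pow_mul]
    simp

theorem case_rect {l : ℕ} (hl : 0 < l) {z : ℂ} (hz : IsPrimitiveRoot z l)
    {P : Multiset ℕ+ → SymFn FF} (hP : IsMacdonaldBasis qF tF P) (r : ℕ+) :
    macEvalRoots l z (P (Multiset.replicate l r)) = (-1 : KK) ^ ((l - 1) * (r : ℕ)) := by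
  rw [macEval_eq]
  have hcard : Multiset.card (Multiset.replicate l r) = l := by simp
  have hrow := fun i (hi : i < l) => row_repl r hi
  set lam := Multiset.replicate l r with hlam
  have hLo : Lo FF lam ≤ Il FF l := by
    unfold Lo
    rw [Submodule.span_le]
    rintro _ ⟨mu, hmu, rfl⟩
    apply schur_Il
    by_contra hc
    have hc' : Multiset.card mu ≤ l := by omega
    obtain ⟨k, hk, h1, h2⟩ := first_diff hmu hcard.le hc'
    have h3 := hmu.2.1
    rw [wt_eq hc', wt_eq hcard.le] at h3
    have h4 : ∑ i ∈ Finset.range l, row mu i < ∑ i ∈ Finset.range l, row lam i := by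
      apply Finset.sum_lt_sum
      · intro i hi
        have hi := Finset.mem_range.1 hi
        by_cases hik : i < k
        · exact (h1 i hik).le
        · have h5 := row_anti mu (show k ≤ i by omega)
          rw [hrow i hi]
          rw [hrow k hk] at h2
          omega
      · exact ⟨k, Finset.mem_range.2 hk, h2⟩
    omega
  have h1 := ev_Il (yy l z) (hLo (hP.1 lam))
  rw [map_sub, sub_eq_zero] at h1
  have hz2 := zz_prim hz
  have hinj : Function.Injective (yy l z) := by
    intro i j hij
    apply Fin.ext
    exact hz2.pow_inj i.2 j.2 hij
  have h2 := bialternant (R := FF) (yy l z) (fun i => rowF l lam i + dl i)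
  have h3 : alt (yy l z) (fun i => rowF l lam i + dl i) = (∏ k, yy l z k ^ (r : ℕ)) * alt (yy l z) dl := by
    unfold alt
    rw [← Matrix.det_mul_row]
    congr 1
    ext i k
    simp only [Matrix.of_apply]
    rw [← pow_add]
    unfold rowF
    rw [hrow i i.2]
  rw [h3] at h2
  have := domFF
  have h4 := mul_right_cancel₀ (alt_delta_ne_zero (yy l z) hinj) h2
  rw [h1, ← schur_detH (R := FF) hcard.le, aeval_detH, h4, Finset.prod_pow]
  have h5 : ∏ k, yy l z k = RatFunc.C ((-1 : KK) ^ (l - 1)) := by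
    unfold yy
    rw [← Finset.prod_range (fun i => (RatFunc.C (RatFunc.C z : KK) : FF) ^ i)]
    have h6 := congrArg (fun x : ℂ => (RatFunc.C (RatFunc.C x : KK) : FF)) (prod_zeta hl hz)
    simp only [map_prod, map_pow] at h6
    rw [h6]
    simp
  rw [h5, ← map_pow, C_eval, ← pow_mul]

end PartI
end MacProof
end



noncomputable section

open MvPolynomial

/-- **Specialization of `P_λ` at the alphabet of `l`-th roots of unity and `t = ζ`**
(Corollary 3.2 of the paper).  Let `l > 0`, `λ` a partition with at most `l` parts, and
`ζ` a primitive `l`-th root of unity.  Then `P_λ(1, ζ, ζ², …, ζ^{l-1}; q, ζ)` equals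
`(-1)^{(l-1)r}` if `λ = (r^l)` for some `r ≥ 0` (including the empty partition for `r = 0`),
and equals `0` otherwise. -/
theorem macdonald_P_roots_of_unity
    (l : ℕ) (hl : 0 < l) (zeta : ℂ) (hzeta : IsPrimitiveRoot zeta l)
    (P : Multiset ℕ+ → SymFn FF) (hP : IsMacdonaldBasis qF tF P)
    (lam : Multiset ℕ+) (hlen : Multiset.card lam ≤ l) :
    (lam = 0 → macEvalRoots l zeta (P lam) = 1) ∧
    (∀ r : ℕ+, lam = Multiset.replicate l r →
        macEvalRoots l zeta (P lam) = (-1 : KK) ^ ((l - 1) * (r : ℕ))) ∧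
    (lam ≠ 0 → (¬ ∃ r : ℕ+, lam = Multiset.replicate l r) →
        macEvalRoots l zeta (P lam) = 0) := by
  refine ⟨?_, ?_, ?_⟩
  · rintro rfl
    exact MacProof.case_zero l zeta hP
  · rintro r rfl
    exact MacProof.case_rect hl hzeta hP r
  · intro h0 hr
    exact MacProof.case_generic hl hzeta hP hlen h0 hr
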